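/- arXiv:1406.0168 — 2 statements merged into one kernel-verified Lean document; each statement's English description precedes it below -/
import Mathlib

section
/- There exist absolute constants C > 0 and k ≥ 0 with the following property. Let t > 0, x ∈ ℝ², C_f > 0, and let K_g : [0,t] × ℝ² → [0,∞) be measurable such that for every a ∈ [0,t] the flux of K_g on the backward light cone with tip (a,x) is at most C_f. Then for every ε ∈ (0,1]: ∫₀ᵗ ∫_{(1−ε)(t−s) < |y−x| ≤ t−s} K_g(s,y)^{5/3} / ( (t−s) (1 − |ξ|²)^{1/2} ) dy ds ≤ C C_f^{5/6} (1+t)^k ε^{1/2}, where ξ = (y−x)/(t−s). -/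
open MeasureTheory Set
open scoped NNReal ENNReal

/-- The unit vector `(cos θ, sin θ) ∈ ℝ²`. -/
noncomputable def unitVec (θ : ℝ) : EuclideanSpace ℝ (Fin 2) :=
  (EuclideanSpace.equiv (Fin 2) ℝ).symm ![Real.cos θ, Real.sin θ]

/-- The flux `∫₀^a ∫₀^{2π} (a−s) K_g(s, x + (a−s)ω(θ))² dθ ds` of `K_g` on the backward
light cone with tip `(a, x)`. -/
noncomputable def coneFlux (Kg : ℝ → EuclideanSpace ℝ (Fin 2) → ℝ) (a : ℝ)
    (x : EuclideanSpace ℝ (Fin 2)) : ℝ≥0∞ :=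
  ∫⁻ s in Ioc (0 : ℝ) a, ∫⁻ θ in Ioc (0 : ℝ) (2 * Real.pi),
    ENNReal.ofReal ((a - s) * Kg s (x + (a - s) • unitVec θ) ^ 2)

lemma unitVec_measurable : Measurable unitVec := by
  unfold unitVec
  apply Continuous.measurable
  refine (EuclideanSpace.equiv (Fin 2) ℝ).symm.continuous.comp ?_
  refine continuous_pi fun i => ?_
  fin_cases i
  · exact Real.continuous_cos
  · exact Real.continuous_sin

lemma norm_unitVec (θ : ℝ) : ‖unitVec θ‖ = 1 := by
  rw [EuclideanSpace.norm_eq]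
  simp [unitVec, Fin.sum_univ_two]

lemma unitVec_add_pi (θ : ℝ) : unitVec (θ + Real.pi) = - unitVec θ := by
  ext i
  fin_cases i <;> simp [unitVec]

lemma polar_lintegral (x : EuclideanSpace ℝ (Fin 2))
    (F : EuclideanSpace ℝ (Fin 2) → ℝ≥0∞) (hF : Measurable F) :
    ∫⁻ y, F y = ∫⁻ r in Ioi (0 : ℝ), ∫⁻ θ in Ioc (0 : ℝ) (2 * Real.pi),
      ENNReal.ofReal r * F (x + r • unitVec θ) := by
  rw [← lintegral_sub_left_eq_self F x]
  have hm : Measurable (fun y : EuclideanSpace ℝ (Fin 2) => F (x - y)) := by fun_prop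
  have e1 := ((EuclideanSpace.volume_preserving_symm_measurableEquiv_toLp (Fin 2)).symm).lintegral_comp hm
  have hm2 : Measurable (fun v : Fin 2 → ℝ => F (x - (MeasurableEquiv.toLp 2 (Fin 2 → ℝ)) v)) :=
    hm.comp (MeasurableEquiv.measurable _)
  have e2 := ((volume_preserving_finTwoArrow ℝ).symm).lintegral_comp hm2
  rw [← e1]
  simp only [MeasurableEquiv.symm_symm]
  rw [← e2, ← lintegral_comp_polarCoord_symm, polarCoord_target, Measure.volume_eq_prod]
  have key : ∀ p : ℝ × ℝ, (MeasurableEquiv.toLp 2 (Fin 2 → ℝ))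
      ((MeasurableEquiv.finTwoArrow (α := ℝ)).symm (polarCoord.symm p)) = p.1 • unitVec p.2 := by
    intro p
    ext i
    fin_cases i <;> simp [unitVec, MeasurableEquiv.finTwoArrow, polarCoord]
  simp only [key]
  have := unitVec_measurable
  rw [setLIntegral_prod _ (by fun_prop)]
  refine lintegral_congr fun r => ?_
  simp only [smul_eq_mul]
  rw [restrict_Ioo_eq_restrict_Ioc, ← lintegral_indicator measurableSet_Ioc,
    ← lintegral_indicator measurableSet_Ioc]
  rw [← lintegral_add_right_eq_self (fun a => (Ioc (0 : ℝ) (2 * Real.pi)).indicator _ a) Real.pi]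
  refine lintegral_congr fun θ => ?_
  have hiff : θ + Real.pi ∈ Ioc (0 : ℝ) (2 * Real.pi) ↔ θ ∈ Ioc (-Real.pi) Real.pi := by
    simp only [mem_Ioc]
    constructor <;> rintro ⟨h1, h2⟩ <;> constructor <;> linarith
  by_cases h : θ ∈ Ioc (-Real.pi) Real.pi
  · rw [indicator_of_mem h, indicator_of_mem (hiff.2 h), unitVec_add_pi, smul_neg, sub_eq_add_neg]
  · rw [indicator_of_notMem h, indicator_of_notMem (fun h' => h (hiff.1 h'))]

lemma lint_neg_two {c : ℝ} (hc : 0 < c) :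
    ∫⁻ u in Ioi c, ENNReal.ofReal (u ^ (-2 : ℝ)) = ENNReal.ofReal c⁻¹ := by
  rw [← ofReal_integral_eq_lintegral_ofReal (integrableOn_Ioi_rpow_of_lt (by norm_num) hc)]
  · rw [integral_Ioi_rpow_of_lt (by norm_num) hc]
    norm_num [Real.rpow_neg_one]
  · filter_upwards [ae_restrict_mem measurableSet_Ioi] with u hu
    exact Real.rpow_nonneg (hc.le.trans (le_of_lt hu)) _

lemma lint_neg_two_thirds {c : ℝ} (hc : 0 < c) :
    ∫⁻ u in Ioc 0 c, ENNReal.ofReal (u ^ (-2/3 : ℝ)) = ENNReal.ofReal (3 * c ^ (1/3 : ℝ)) := by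
  rw [← ofReal_integral_eq_lintegral_ofReal]
  · rw [← intervalIntegral.integral_of_le hc.le, integral_rpow (Or.inl (by norm_num))]
    congr 1
    norm_num
    ring
  · exact (intervalIntegrable_iff_integrableOn_Ioc_of_le hc.le).1
      (intervalIntegral.intervalIntegrable_rpow' (by norm_num))
  · filter_upwards [ae_restrict_mem measurableSet_Ioc] with u hu
    exact Real.rpow_nonneg hu.1.le _

lemma pointwise_bound {r τ K : ℝ} (hr : 0 < r) (h : r < τ) (hK : 0 ≤ K) :
    r * K ^ ((5 : ℝ) / 3) / (τ * (1 - (r / τ) ^ 2) ^ ((1 : ℝ) / 2)) ≤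
      (r * K ^ 2) ^ (5/6 : ℝ) * ((τ - r) ^ (-1/2 : ℝ) * τ ^ (-1/3 : ℝ)) := by
  have hτ : 0 < τ := hr.trans h
  have hd : 0 < τ - r := sub_pos.2 h
  have h1 : (τ - r) / τ ≤ 1 - (r / τ) ^ 2 := by
    have : r / τ ≤ 1 := (div_le_one hτ).2 h.le
    have h0 : 0 ≤ r / τ := by positivity
    rw [sub_div, div_self hτ.ne']
    nlinarith
  have h2 : (τ - r) ^ ((1 : ℝ) / 2) / τ ^ ((1 : ℝ) / 2) ≤ (1 - (r / τ) ^ 2) ^ ((1 : ℝ) / 2) := by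
    rw [← Real.div_rpow hd.le hτ.le]
    exact Real.rpow_le_rpow (by positivity) h1 (by norm_num)
  have h3 : r ^ (1/6 : ℝ) ≤ τ ^ (1/6 : ℝ) := Real.rpow_le_rpow hr.le h.le (by norm_num)
  have e1 : r = r ^ (5/6 : ℝ) * r ^ (1/6 : ℝ) := by
    rw [← Real.rpow_add hr]; norm_num
  have e2 : (r * K ^ 2) ^ (5/6 : ℝ) = r ^ (5/6 : ℝ) * K ^ ((5 : ℝ) / 3) := by
    rw [Real.mul_rpow hr.le (by positivity), ← Real.rpow_natCast, ← Real.rpow_mul hK]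
    norm_num
  calc r * K ^ ((5 : ℝ) / 3) / (τ * (1 - (r / τ) ^ 2) ^ ((1 : ℝ) / 2))
      ≤ r * K ^ ((5 : ℝ) / 3) / (τ * ((τ - r) ^ ((1 : ℝ) / 2) / τ ^ ((1 : ℝ) / 2))) := by
        gcongr
    _ = (r ^ (5/6 : ℝ) * K ^ ((5 : ℝ) / 3)) * (r ^ (1/6 : ℝ) * ((τ - r) ^ (-1/2 : ℝ) * τ ^ (-1/2 : ℝ))) := by
        have a1 : τ = τ ^ ((1 : ℝ) / 2) * τ ^ ((1 : ℝ) / 2) := by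
          rw [← Real.rpow_add hτ]; norm_num
        have a2 : τ ^ (-1/2 : ℝ) = (τ ^ ((1 : ℝ) / 2))⁻¹ := by
          rw [← Real.rpow_neg hτ.le]; norm_num
        have a3 : (τ - r) ^ (-1/2 : ℝ) = ((τ - r) ^ ((1 : ℝ) / 2))⁻¹ := by
          rw [← Real.rpow_neg hd.le]; norm_num
        have a4 : τ * ((τ - r) ^ ((1 : ℝ) / 2) / τ ^ ((1 : ℝ) / 2)) =
            (τ - r) ^ ((1 : ℝ) / 2) * τ ^ ((1 : ℝ) / 2) := by
          have : 0 < τ ^ ((1 : ℝ) / 2) := by positivity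
          rw [mul_div_assoc', div_eq_iff this.ne']
          nth_rewrite 1 [a1]
          ring
        rw [a4, a2, a3]
        nth_rewrite 1 [e1]
        rw [div_eq_mul_inv, mul_inv]
        ring
    _ ≤ (r ^ (5/6 : ℝ) * K ^ ((5 : ℝ) / 3)) * (τ ^ (1/6 : ℝ) * ((τ - r) ^ (-1/2 : ℝ) * τ ^ (-1/2 : ℝ))) := by
        gcongr
    _ = _ := by
        rw [e2]
        have : τ ^ (-1/3 : ℝ) = τ ^ (1/6 : ℝ) * τ ^ (-1/2 : ℝ) := by
          rw [← Real.rpow_add hτ]; norm_num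
        rw [this]; ring

/-- The integrand after passing to polar coordinates and substituting `r = a - s`. -/
noncomputable def Gf (Kg : ℝ → EuclideanSpace ℝ (Fin 2) → ℝ) (x : EuclideanSpace ℝ (Fin 2))
    (t ε s a θ : ℝ) : ℝ≥0∞ :=
  if 0 < s ∧ s < a ∧ a ≤ t ∧ t - a < ε * (t - s) then
    ENNReal.ofReal ((a - s) * Kg s (x + (a - s) • unitVec θ) ^ ((5 : ℝ) / 3) /
      ((t - s) * (1 - ((a - s) / (t - s)) ^ 2) ^ ((1 : ℝ) / 2)))
  else 0

lemma Gf_measurable (Kg : ℝ → EuclideanSpace ℝ (Fin 2) → ℝ) (x : EuclideanSpace ℝ (Fin 2))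
    (t ε : ℝ) (hK : Measurable (Function.uncurry Kg)) :
    Measurable (fun p : (ℝ × ℝ) × ℝ => Gf Kg x t ε p.1.1 p.1.2 p.2) := by
  have hu := unitVec_measurable
  unfold Gf
  refine Measurable.ite ?_ ?_ measurable_const
  · simp only [setOf_and]
    refine MeasurableSet.inter ?_ (MeasurableSet.inter ?_ (MeasurableSet.inter ?_ ?_))
    · exact measurableSet_lt (by fun_prop) (by fun_prop)
    · exact measurableSet_lt (by fun_prop) (by fun_prop)
    · exact measurableSet_le (by fun_prop) (by fun_prop)
    · exact measurableSet_lt (by fun_prop) (by fun_prop)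
  · have h1 : Measurable (fun p : (ℝ × ℝ) × ℝ =>
        Kg p.1.1 (x + (p.1.2 - p.1.1) • unitVec p.2)) := by
      have h2 : Measurable (fun p : (ℝ × ℝ) × ℝ =>
        (p.1.1, x + (p.1.2 - p.1.1) • unitVec p.2)) := by fun_prop
      exact hK.comp h2
    fun_prop

lemma W_bound {t c : ℝ} (hc : 0 < c) :
    ∫⁻ s : ℝ, (if c < t - s then ENNReal.ofReal ((t - s) ^ (-1/3 : ℝ)) else 0) ^ (6 : ℝ)
      = ENNReal.ofReal c⁻¹ := by
  rw [lintegral_sub_left_eq_self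
    (fun u : ℝ => (if c < u then ENNReal.ofReal (u ^ (-1/3 : ℝ)) else 0) ^ (6 : ℝ)) t,
    ← lint_neg_two hc, ← lintegral_indicator measurableSet_Ioi]
  refine lintegral_congr fun u => ?_
  by_cases h : c < u
  · have hu : 0 < u := hc.trans h
    rw [if_pos h, indicator_of_mem (show u ∈ Ioi c from h),
      ENNReal.ofReal_rpow_of_nonneg (by positivity) (by norm_num), ← Real.rpow_mul hu.le]
    norm_num
  · rw [if_neg h, indicator_of_notMem (show u ∉ Ioi c from h)]
    simp

lemma slice_bound (Kg : ℝ → EuclideanSpace ℝ (Fin 2) → ℝ) (x : EuclideanSpace ℝ (Fin 2))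
    (t ε a Cf : ℝ) (hK : Measurable (Function.uncurry Kg)) (hK0 : ∀ s y, 0 ≤ Kg s y)
    (hε : 0 < ε) (hat : a < t)
    (hfl : coneFlux Kg a x ≤ ENNReal.ofReal Cf) :
    ∫⁻ s, ∫⁻ θ in Ioc (0 : ℝ) (2 * Real.pi), Gf Kg x t ε s a θ ≤
      (ENNReal.ofReal Cf ^ (5/6 : ℝ) * ENNReal.ofReal (2 * Real.pi) ^ (1/6 : ℝ) *
        ENNReal.ofReal ε ^ (1/6 : ℝ)) * ENNReal.ofReal ((t - a) ^ (-2/3 : ℝ)) := by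
  have hd : 0 < t - a := sub_pos.2 hat
  have hu := unitVec_measurable
  set W : ℝ → ℝ≥0∞ := fun s =>
    if (t - a) / ε < t - s then ENNReal.ofReal ((t - s) ^ (-1/3 : ℝ)) else 0 with hW
  set P : ℝ × ℝ → ℝ≥0∞ := fun p =>
    ENNReal.ofReal ((a - p.1) * Kg p.1 (x + (a - p.1) • unitVec p.2) ^ 2) with hP
  have hWm : Measurable W := by
    refine Measurable.ite (measurableSet_lt (by fun_prop) (by fun_prop)) ?_ measurable_const
    fun_prop
  have hPm : Measurable P := by
    have h1 : Measurable (fun p : ℝ × ℝ =>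
        Kg p.1 (x + (a - p.1) • unitVec p.2)) := by
      have h2 : Measurable (fun p : ℝ × ℝ => (p.1, x + (a - p.1) • unitVec p.2)) := by fun_prop
      exact hK.comp h2
    fun_prop
  set ν : Measure ℝ := volume.restrict (Ioc (0 : ℝ) (2 * Real.pi)) with hν
  set κ : ℝ≥0∞ := ENNReal.ofReal ((t - a) ^ (-1/2 : ℝ)) with hκ
  have step1 : ∫⁻ s, ∫⁻ θ, Gf Kg x t ε s a θ ∂ν ≤
      ∫⁻ s in Ioc 0 a, ∫⁻ θ, κ * (P (s, θ) ^ (5/6 : ℝ) * W s) ∂ν := by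
    rw [← lintegral_indicator measurableSet_Ioc]
    refine lintegral_mono fun s => ?_
    by_cases hs : 0 < s ∧ s < a ∧ a ≤ t ∧ t - a < ε * (t - s)
    · obtain ⟨h1, h2, h3, h4⟩ := hs
      rw [indicator_of_mem (show s ∈ Ioc 0 a from ⟨h1, h2.le⟩)]
      refine lintegral_mono fun θ => ?_
      have h5 : (t - a) / ε < t - s := by rw [div_lt_iff₀ hε]; linarith
      have hts : 0 < t - s := by linarith
      have has : 0 < a - s := by linarith
      simp only [Gf, hW, hP, hκ]
      rw [if_pos ⟨h1, h2, h3, h4⟩, if_pos h5,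
        ENNReal.ofReal_rpow_of_nonneg (by positivity) (by norm_num),
        ← ENNReal.ofReal_mul (by positivity), ← ENNReal.ofReal_mul (by positivity)]
      apply ENNReal.ofReal_le_ofReal
      refine (pointwise_bound has (by linarith : a - s < t - s) (hK0 _ _)).trans (le_of_eq ?_)
      rw [show t - s - (a - s) = t - a by ring]
      ring
    · simp only [Gf, if_neg hs]
      simp
  refine step1.trans ?_
  have hAm : Measurable (fun p : ℝ × ℝ => P p ^ (5/6 : ℝ)) := by fun_prop
  have hWm' : Measurable (fun p : ℝ × ℝ => W p.1) := by fun_prop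
  have hol := ENNReal.lintegral_mul_le_Lp_mul_Lq ((volume.restrict (Ioc 0 a)).prod ν)
    (p := 6/5) (q := 6) (by rw [Real.holderConjugate_iff]; norm_num)
    hAm.aemeasurable hWm'.aemeasurable
  have e1 : ∫⁻ p, (P p ^ (5/6 : ℝ)) ^ (6/5 : ℝ) ∂((volume.restrict (Ioc 0 a)).prod ν)
      ≤ ENNReal.ofReal Cf := by
    refine le_trans (le_of_eq ?_) hfl
    simp only [← ENNReal.rpow_mul]
    norm_num
    rw [lintegral_prod _ hPm.aemeasurable]
    rfl
  have e2 : ∫⁻ p, (W p.1) ^ (6 : ℝ) ∂((volume.restrict (Ioc 0 a)).prod ν)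
      ≤ ENNReal.ofReal (2 * Real.pi) * ENNReal.ofReal ((t - a) / ε)⁻¹ := by
    rw [lintegral_prod _ (by fun_prop)]
    simp only [lintegral_const]
    rw [lintegral_mul_const _ (by fun_prop), mul_comm]
    refine mul_le_mul' (le_of_eq ?_) ?_
    · simp [hν]
    · exact (setLIntegral_le_lintegral _ _).trans (W_bound (by positivity)).le
  calc ∫⁻ s in Ioc 0 a, ∫⁻ θ, κ * (P (s, θ) ^ (5/6 : ℝ) * W s) ∂ν
      = ∫⁻ p, κ * (P p ^ (5/6 : ℝ) * W p.1) ∂((volume.restrict (Ioc 0 a)).prod ν) := by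
        rw [lintegral_prod _ (by fun_prop)]
    _ = κ * ∫⁻ p, (P p ^ (5/6 : ℝ) * W p.1) ∂((volume.restrict (Ioc 0 a)).prod ν) := by
        rw [lintegral_const_mul _ (by fun_prop)]
    _ ≤ κ * (ENNReal.ofReal Cf ^ (1 / (6/5) : ℝ) *
          (ENNReal.ofReal (2 * Real.pi) * ENNReal.ofReal ((t - a) / ε)⁻¹) ^ (1 / 6 : ℝ)) := by
        gcongr
        refine hol.trans ?_
        gcongr
    _ = _ := by
        have h0 : ENNReal.ofReal ((t - a) ^ (-2/3 : ℝ)) =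
            κ * ENNReal.ofReal (t - a)⁻¹ ^ (1/6 : ℝ) := by
          rw [ENNReal.ofReal_rpow_of_nonneg (by positivity) (by norm_num), hκ,
            ← ENNReal.ofReal_mul (by positivity)]
          congr 1
          rw [← Real.rpow_neg_one, ← Real.rpow_mul hd.le, ← Real.rpow_add hd]
          norm_num
        rw [h0, inv_div, div_eq_mul_inv ε (t - a), ENNReal.ofReal_mul hε.le,
          ENNReal.mul_rpow_of_nonneg _ _ (by norm_num),
          ENNReal.mul_rpow_of_nonneg _ _ (by norm_num)]
        norm_num
        ring

lemma inner_eq (Kg : ℝ → EuclideanSpace ℝ (Fin 2) → ℝ) (x : EuclideanSpace ℝ (Fin 2))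
    (t ε s : ℝ) (hK : Measurable (Function.uncurry Kg)) (hs : 0 < s) :
    (∫⁻ y in {y | (1 - ε) * (t - s) < dist y x ∧ dist y x ≤ t - s},
              ENNReal.ofReal (Kg s y ^ ((5 : ℝ) / 3) /
                ((t - s) * (1 - (dist y x / (t - s)) ^ 2) ^ ((1 : ℝ) / 2))))
      = ∫⁻ a, ∫⁻ θ in Ioc (0 : ℝ) (2 * Real.pi), Gf Kg x t ε s a θ := by
  have hKs : Measurable (Kg s) := hK.comp (measurable_const.prodMk measurable_id)
  have hS : MeasurableSet {y | (1 - ε) * (t - s) < dist y x ∧ dist y x ≤ t - s} := by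
    simp only [setOf_and]
    refine MeasurableSet.inter ?_ ?_
    · exact measurableSet_lt (by fun_prop) (by fun_prop)
    · exact measurableSet_le (by fun_prop) (by fun_prop)
  rw [← lintegral_indicator hS, polar_lintegral x _ (Measurable.indicator (by fun_prop) hS),
    ← lintegral_indicator measurableSet_Ioi,
    ← lintegral_sub_right_eq_self (fun r => (Ioi (0 : ℝ)).indicator _ r) s]
  refine lintegral_congr fun a => ?_
  by_cases h : s < a
  · have has : 0 < a - s := sub_pos.2 h
    rw [indicator_of_mem (show a - s ∈ Ioi (0 : ℝ) from has)]
    refine lintegral_congr fun θ => ?_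
    have hdist : dist (x + (a - s) • unitVec θ) x = a - s := by
      rw [dist_eq_norm, add_sub_cancel_left, norm_smul, norm_unitVec, mul_one,
        Real.norm_of_nonneg has.le]
    by_cases h2 : a ≤ t ∧ t - a < ε * (t - s)
    · rw [indicator_of_mem, Gf, if_pos ⟨hs, h, h2⟩, hdist, ← ENNReal.ofReal_mul has.le,
        mul_div_assoc]
      simp only [mem_ofPred_eq, hdist]
      constructor <;> linarith [h2.1, h2.2]
    · rw [indicator_of_notMem, Gf, if_neg (fun h' => h2 h'.2.2), mul_zero]
      simp only [mem_ofPred_eq, hdist]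
      rintro ⟨h3, h4⟩
      exact h2 ⟨by linarith, by linarith⟩
  · rw [indicator_of_notMem (by simpa using h)]
    simp [Gf, h]

/-- **Near-boundary flux estimate** (the bound for the integral (5.14) in the proof of
Proposition 5.4).  There are absolute constants `C > 0` and `k ≥ 0` such that if the
flux of `K_g` on every backward cone with tip `(a,x)`, `a ∈ [0,t]`, is at most `C_f`,
then for every `ε ∈ (0,1]`, with `ξ = (y−x)/(t−s)`,
`∫₀ᵗ∫_{(1−ε)(t−s)<|y−x|≤t−s} K_g^{5/3}/((t−s)(1−|ξ|²)^{1/2}) dy ds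
  ≤ C C_f^{5/6} (1+t)^k ε^{1/2}`. -/
theorem near_boundary_flux_estimate :
    ∃ C : ℝ≥0, 0 < C ∧ ∃ k : ℝ, 0 ≤ k ∧
      ∀ (t : ℝ), 0 < t → ∀ (x : EuclideanSpace ℝ (Fin 2)) (Cf : ℝ), 0 < Cf →
      ∀ (Kg : ℝ → EuclideanSpace ℝ (Fin 2) → ℝ),
        Measurable (Function.uncurry Kg) → (∀ s y, 0 ≤ Kg s y) →
        (∀ a, 0 ≤ a → a ≤ t → coneFlux Kg a x ≤ ENNReal.ofReal Cf) →
        ∀ ε : ℝ, 0 < ε → ε ≤ 1 →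
          (∫⁻ s in Ioc (0 : ℝ) t,
              ∫⁻ y in {y | (1 - ε) * (t - s) < dist y x ∧ dist y x ≤ t - s},
              ENNReal.ofReal (Kg s y ^ ((5 : ℝ) / 3) /
                ((t - s) * (1 - (dist y x / (t - s)) ^ 2) ^ ((1 : ℝ) / 2))))
            ≤ C * ENNReal.ofReal Cf ^ ((5 : ℝ) / 6) * ENNReal.ofReal (1 + t) ^ k
              * ENNReal.ofReal ε ^ ((1 : ℝ) / 2) := by
  refine ⟨3 * (2 * Real.pi).toNNReal ^ (1/6 : ℝ), ?_, 1/3, by norm_num, ?_⟩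
  · have : 0 < (2 * Real.pi).toNNReal := Real.toNNReal_pos.2 (by positivity)
    have := NNReal.rpow_pos (p := 1/6) this
    positivity
  intro t ht x Cf hCf Kg hK hK0 hfl ε hε hε1
  have hGm := Gf_measurable Kg x t ε hK
  set M : ℝ≥0∞ := ENNReal.ofReal Cf ^ (5/6 : ℝ) * ENNReal.ofReal (2 * Real.pi) ^ (1/6 : ℝ) *
        ENNReal.ofReal ε ^ (1/6 : ℝ) with hM
  have hgm : Measurable (fun p : ℝ × ℝ =>
      ∫⁻ θ in Ioc (0 : ℝ) (2 * Real.pi), Gf Kg x t ε p.1 p.2 θ) :=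
    hGm.lintegral_prod_right'
  have hae : ∀ᵐ a : ℝ, ∫⁻ s, ∫⁻ θ in Ioc (0 : ℝ) (2 * Real.pi), Gf Kg x t ε s a θ ≤
      M * (Ioc 0 (ε * t)).indicator (fun u : ℝ => ENNReal.ofReal (u ^ (-2/3 : ℝ))) (t - a) := by
    have hne : ∀ᵐ a : ℝ, a ≠ t := by simp [ae_iff, measure_singleton]
    filter_upwards [hne] with a ha
    by_cases h : t - a ∈ Ioc 0 (ε * t)
    · rw [indicator_of_mem h]
      have h1 := h.1
      have h2 := h.2
      refine slice_bound Kg x t ε a Cf hK hK0 hε (by linarith) (hfl a ?_ (by linarith))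
      nlinarith
    · have : ∀ s θ, Gf Kg x t ε s a θ = 0 := by
        intro s θ
        rw [Gf, if_neg]
        rintro ⟨h1, h2, h3, h4⟩
        refine h ⟨sub_pos.2 (lt_of_le_of_ne h3 ha), ?_⟩
        nlinarith
      simp [this]
  calc _ = ∫⁻ s in Ioc (0 : ℝ) t, ∫⁻ a, ∫⁻ θ in Ioc (0 : ℝ) (2 * Real.pi), Gf Kg x t ε s a θ := by
        refine setLIntegral_congr_fun measurableSet_Ioc fun s hs => ?_
        exact inner_eq Kg x t ε s hK hs.1
    _ ≤ ∫⁻ s, ∫⁻ a, ∫⁻ θ in Ioc (0 : ℝ) (2 * Real.pi), Gf Kg x t ε s a θ :=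
        setLIntegral_le_lintegral _ _
    _ = ∫⁻ a, ∫⁻ s, ∫⁻ θ in Ioc (0 : ℝ) (2 * Real.pi), Gf Kg x t ε s a θ :=
        lintegral_lintegral_swap hgm.aemeasurable
    _ ≤ ∫⁻ a, M * (Ioc 0 (ε * t)).indicator
          (fun u : ℝ => ENNReal.ofReal (u ^ (-2/3 : ℝ))) (t - a) := lintegral_mono_ae hae
    _ = M * ENNReal.ofReal (3 * (ε * t) ^ (1/3 : ℝ)) := by
        rw [lintegral_sub_left_eq_self (fun u => M * (Ioc 0 (ε * t)).indicator
          (fun u : ℝ => ENNReal.ofReal (u ^ (-2/3 : ℝ))) u) t, lintegral_const_mul,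
          lintegral_indicator measurableSet_Ioc, lint_neg_two_thirds (by positivity)]
        exact Measurable.indicator (by fun_prop) measurableSet_Ioc
    _ ≤ M * (3 * (ENNReal.ofReal ε ^ (1/3 : ℝ) * ENNReal.ofReal (1 + t) ^ (1/3 : ℝ))) := by
        rw [ENNReal.ofReal_mul (by norm_num),
          ← ENNReal.ofReal_rpow_of_nonneg (by positivity) (by norm_num),
          ENNReal.ofReal_mul hε.le, ENNReal.mul_rpow_of_nonneg _ _ (by norm_num)]
        gcongr
        · simp
        · linarith
    _ = _ := by
        have h1 : ENNReal.ofReal ε ^ ((1 : ℝ) / 2) =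
            ENNReal.ofReal ε ^ (1/6 : ℝ) * ENNReal.ofReal ε ^ (1/3 : ℝ) := by
          rw [← ENNReal.rpow_add_of_nonneg _ _ (by norm_num) (by norm_num)]
          norm_num
        rw [h1, hM, ENNReal.coe_mul, ENNReal.coe_rpow_of_nonneg _ (by norm_num)]
        simp only [ENNReal.ofReal, ENNReal.coe_ofNat]
        ring
end

section
/- Let N > 13 be a real number and C₀, C₁ > 0. Let T > 0 and let f : [0,T) × ℝ² × ℝ² → [0,∞) be measurable with f ≤ C₀ almost everywhere and sup_{0 ≤ t < T} ∫_{ℝ²}∫_{ℝ²} p_0 f(t,x,p) dp dx ≤ C₁. Define W_T(t,x) = ∫₀ᵗ ∫_{|y−x| ≤ t−s} ∫_{ℝ²} f(s,y,p) / ( p_0 (1 + p̂·ξ) (t−s) √((t−s)² − |y−x|²) ) dp dy ds (the integral dominating the Glassey–Schaeffer term K_T in two dimensions). Then there exist q₂' ∈ [1,∞) depending only on N, and constants C > 0, k ≥ 0 depending only on N, C₀ and C₁ (not on T), such that ‖W_T‖_{L¹_t([0,T); L^{N+2}_x)}^{N+2} ≤ C (1+T)^k ‖f p_0^N‖_{L^∞_t([0,T);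 L¹_x L¹_p)}^{(N+2)/(5(N−1))} ‖f p_0^N‖_{L^{q₂'}_t([0,T); L¹_x L¹_p)}^{(4N−7)/(5(N−1))}. -/
open MeasureTheory Set
open scoped NNReal ENNReal RealInnerProductSpace

/-- `p₀ = √(1 + |p|²)` for `p ∈ ℝ²`. -/
noncomputable def pZero (p : EuclideanSpace ℝ (Fin 2)) : ℝ := Real.sqrt (1 + ‖p‖ ^ 2)

/-- `p̂ = p / p₀` for `p ∈ ℝ²`. -/
noncomputable def pHat (p : EuclideanSpace ℝ (Fin 2)) : EuclideanSpace ℝ (Fin 2) :=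
  (pZero p)⁻¹ • p

/-- The integral
`W_T(t,x) = ∫₀ᵗ∫_{|y−x|≤t−s}∫ f(s,y,p)/(p₀(1+p̂·ξ)(t−s)√((t−s)²−|y−x|²)) dp dy ds`
(with `ξ = (y−x)/(t−s)`) dominating the Glassey–Schaeffer term `K_T` in two dimensions. -/
noncomputable def WT (f : ℝ → EuclideanSpace ℝ (Fin 2) → EuclideanSpace ℝ (Fin 2) → ℝ)
    (t : ℝ) (x : EuclideanSpace ℝ (Fin 2)) : ℝ≥0∞ :=
  ∫⁻ s in Ioc (0 : ℝ) t, ∫⁻ y in {y | dist y x ≤ t - s},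
    ∫⁻ p, ENNReal.ofReal (f s y p /
      (pZero p * (1 + ⟪pHat p, (t - s)⁻¹ • (y - x)⟫)
        * (t - s) * Real.sqrt ((t - s) ^ 2 - dist y x ^ 2)))

/-- The `N`-th moment `∫∫ f(t,x,p) p₀^N dp dx` of `f` at time `t`. -/
noncomputable def momentN (f : ℝ → EuclideanSpace ℝ (Fin 2) → EuclideanSpace ℝ (Fin 2) → ℝ)
    (N : ℝ) (t : ℝ) : ℝ≥0∞ :=
  ∫⁻ x, ∫⁻ p, ENNReal.ofReal (f t x p * pZero p ^ N)


namespace KTaux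

abbrev E := EuclideanSpace ℝ (Fin 2)

lemma rpow_neg_anti {a b : ℝ≥0∞} (h : a ≤ b) {e : ℝ} (he : 0 ≤ e) : b ^ (-e) ≤ a ^ (-e) := by
  rw [ENNReal.rpow_neg, ENNReal.rpow_neg]
  exact ENNReal.inv_le_inv.2 (ENNReal.rpow_le_rpow h he)

/-- Weighted Jensen inequality. -/
lemma jensen {α : Type*} [MeasurableSpace α] (μ : Measure α) {φ h : α → ℝ≥0∞}
    (hφ : AEMeasurable φ μ) (hh : AEMeasurable h μ) {c : ℝ} (hc : 1 ≤ c) :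
    (∫⁻ a, φ a * h a ∂μ) ^ c ≤ (∫⁻ a, φ a ∂μ) ^ (c - 1) * ∫⁻ a, φ a * h a ^ c ∂μ := by
  have c0 : 0 < c := by linarith
  have c1 : 1 / c ≤ 1 := by rw [div_le_one c0]; exact hc
  have key : ∫⁻ a, φ a * h a ∂μ ≤
      (∫⁻ a, φ a ∂μ) ^ (1 - 1 / c) * (∫⁻ a, φ a * h a ^ c ∂μ) ^ (1 / c) := by
    have := ENNReal.lintegral_mul_norm_pow_le (μ := μ) (f := φ) (g := fun a => φ a * h a ^ c)
      hφ (hφ.mul (hh.pow_const c)) (p := 1 - 1 / c) (q := 1 / c) (by linarith) (by positivity)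
      (by ring)
    refine le_trans (le_of_eq ?_) this
    refine lintegral_congr fun a => ?_
    rw [ENNReal.mul_rpow_of_nonneg _ _ (by positivity), ← mul_assoc,
      ← ENNReal.rpow_add_of_nonneg _ _ (by linarith) (by positivity), ← ENNReal.rpow_mul]
    have e1 : c * (1 / c) = 1 := by field_simp
    have e2 : 1 - 1 / c + 1 / c = 1 := by ring
    rw [e1, e2, ENNReal.rpow_one, ENNReal.rpow_one]
  refine (ENNReal.rpow_le_rpow key c0.le).trans (le_of_eq ?_)
  rw [ENNReal.mul_rpow_of_nonneg _ _ c0.le, ← ENNReal.rpow_mul, ← ENNReal.rpow_mul]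
  have h1 : (1 - 1 / c) * c = c - 1 := by field_simp
  have h2 : 1 / c * c = 1 := by field_simp
  rw [h1, h2, ENNReal.rpow_one]

lemma lintegral_scale {F : Type*} [NormedAddCommGroup F] [NormedSpace ℝ F] [MeasurableSpace F]
    [BorelSpace F] [FiniteDimensional ℝ F] (μ : Measure F) [μ.IsAddHaarMeasure] {r : ℝ}
    (hr : 0 < r) (G : F → ℝ≥0∞) :
    ∫⁻ x, G (r⁻¹ • x) ∂μ = ENNReal.ofReal r ^ (Module.finrank ℝ F) * ∫⁻ x, G x ∂μ := by
  have h1 : ∫⁻ x, G x ∂(Measure.map (fun x => r⁻¹ • x) μ) = ∫⁻ x, G (r⁻¹ • x) ∂μ := by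
    exact lintegral_map_equiv G (Homeomorph.smulOfNeZero r⁻¹ (inv_ne_zero hr.ne')).toMeasurableEquiv
  rw [← h1, Measure.map_addHaar_smul μ (inv_ne_zero hr.ne'), lintegral_smul_measure, smul_eq_mul]
  congr 1
  rw [← ENNReal.ofReal_pow hr.le]
  congr 1
  rw [inv_pow, inv_inv, abs_of_pos (by positivity)]

lemma beta_fin {a b : ℝ} (ha : -1 < a) (hb : -1 < b) :
    ∫⁻ x in Ioo (0:ℝ) 1, ENNReal.ofReal x ^ a * ENNReal.ofReal (1 - x) ^ b < ⊤ := by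
  have h := ProbabilityTheory.lintegral_betaPDF_eq_one (α := a + 1) (β := b + 1)
    (by linarith) (by linarith)
  rw [ProbabilityTheory.lintegral_betaPDF] at h
  have hB := ProbabilityTheory.beta_pos (α := a + 1) (β := b + 1) (by linarith) (by linarith)
  set B := ProbabilityTheory.beta (a + 1) (b + 1)
  have : ∫⁻ x in Ioo (0:ℝ) 1, ENNReal.ofReal x ^ a * ENNReal.ofReal (1 - x) ^ b
      = ENNReal.ofReal B * ∫⁻ x in Ioo (0:ℝ) 1,
        ENNReal.ofReal (1 / B * x ^ (a + 1 - 1) * (1 - x) ^ (b + 1 - 1)) := by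
    rw [← lintegral_const_mul' _ _ ENNReal.ofReal_ne_top]
    refine setLIntegral_congr_fun measurableSet_Ioo fun x hx => ?_
    have hx1 : 0 < 1 - x := by linarith [hx.2]
    rw [ENNReal.ofReal_rpow_of_pos hx.1, ENNReal.ofReal_rpow_of_pos hx1,
      ← ENNReal.ofReal_mul (Real.rpow_nonneg hx.1.le _), ← ENNReal.ofReal_mul hB.le]
    congr 1
    have e1 : a + 1 - 1 = a := by ring
    have e2 : b + 1 - 1 = b := by ring
    rw [e1, e2]; field_simp
  rw [this, h]; simp

lemma beta_scale {a b : ℝ} (ha : -1 < a) (hb : -1 < b) :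
    ∃ K : ℝ≥0∞, K < ⊤ ∧ ∀ m n : ℝ, m < n →
      ∫⁻ x in Ioo m n, ENNReal.ofReal (x - m) ^ a * ENNReal.ofReal (n - x) ^ b
        ≤ K * ENNReal.ofReal (n - m) ^ (a + b + 1) := by
  refine ⟨_, beta_fin ha hb, fun m n hmn => ?_⟩
  have hL : 0 < n - m := by linarith
  set L := n - m with hLdef
  set G : ℝ → ℝ≥0∞ := (Ioo (0:ℝ) 1).indicator
    fun x => ENNReal.ofReal x ^ a * ENNReal.ofReal (1 - x) ^ b with hG
  have h1 : ∫⁻ x in Ioo m n, ENNReal.ofReal (x - m) ^ a * ENNReal.ofReal (n - x) ^ b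
      = ∫⁻ x, ENNReal.ofReal L ^ (a + b) * G (L⁻¹ • (x - m)) := by
    rw [← lintegral_indicator measurableSet_Ioo]
    refine lintegral_congr fun x => ?_
    by_cases hx : x ∈ Ioo m n
    · have hx1 : 0 < L⁻¹ * (x - m) := by
        have := hx.1; have : 0 < x - m := by linarith
        positivity
      have e1 : 1 - L⁻¹ * (x - m) = L⁻¹ * (n - x) := by
        field_simp; rw [hLdef]; ring
      have hx3 : 0 < n - x := by linarith [hx.2]
      have hx4 : 0 < x - m := by linarith [hx.1]
      have hx2 : 0 < L⁻¹ * (n - x) := by positivity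
      have hmem : L⁻¹ • (x - m) ∈ Ioo (0:ℝ) 1 := by
        rw [smul_eq_mul]; exact ⟨hx1, by linarith⟩
      rw [indicator_of_mem hx, hG, indicator_of_mem hmem, smul_eq_mul, e1]
      rw [ENNReal.ofReal_rpow_of_pos hx1, ENNReal.ofReal_rpow_of_pos hx2,
        ENNReal.ofReal_rpow_of_pos hL, ENNReal.ofReal_rpow_of_pos hx3,
        ENNReal.ofReal_rpow_of_pos hx4, ← ENNReal.ofReal_mul (by positivity),
        ← ENNReal.ofReal_mul (by positivity), ← ENNReal.ofReal_mul (by positivity)]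
      congr 1
      rw [Real.mul_rpow (by positivity) hx4.le, Real.mul_rpow (by positivity) hx3.le,
        Real.rpow_add hL, Real.inv_rpow hL.le, Real.inv_rpow hL.le]
      have := Real.rpow_pos_of_pos hL a
      have := Real.rpow_pos_of_pos hL b
      field_simp
    · have hmem : L⁻¹ • (x - m) ∉ Ioo (0:ℝ) 1 := by
        intro h
        apply hx
        rw [smul_eq_mul] at h
        have h3 : x - m = L * (L⁻¹ * (x - m)) := by field_simp
        constructor
        · have : 0 < L * (L⁻¹ * (x - m)) := mul_pos hL h.1
          linarith
        · have : L * (L⁻¹ * (x - m)) < L * 1 := by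
            exact mul_lt_mul_of_pos_left h.2 hL
          linarith
      rw [indicator_of_notMem hx, hG, indicator_of_notMem hmem, mul_zero]
  rw [h1, lintegral_const_mul' _ _ (by rw [ENNReal.ofReal_rpow_of_pos hL]; exact ENNReal.ofReal_ne_top),
    lintegral_sub_right_eq_self (fun x => G (L⁻¹ • x)), lintegral_scale volume hL, hG,
    lintegral_indicator measurableSet_Ioo]
  refine le_of_eq ?_
  rw [ENNReal.rpow_add (a + b) 1 (by simpa using hL) ENNReal.ofReal_ne_top, ENNReal.rpow_one]
  simp only [Module.finrank_self, pow_one]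
  ring

lemma lintegral_coord (F : ℝ → ℝ → ℝ≥0∞) (hF : Measurable (fun z : ℝ × ℝ => F z.1 z.2)) :
    ∫⁻ p : E, F (p 0) (p 1) = ∫⁻ a, ∫⁻ b, F a b := by
  have h1 := (EuclideanSpace.volume_preserving_symm_measurableEquiv_toLp (Fin 2)).lintegral_comp
    (f := fun v : Fin 2 → ℝ => F (v 0) (v 1)) (by
      have h0 : Measurable (fun v : Fin 2 → ℝ => (v 0, v 1)) := by fun_prop
      exact hF.comp h0)
  have h2 := (volume_preserving_finTwoArrow ℝ).lintegral_comp
    (f := fun v : ℝ × ℝ => F v.1 v.2) hF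
  rw [Measure.volume_eq_prod, lintegral_prod _ hF.aemeasurable] at h2
  rw [← h2]
  exact h1

lemma exists_rot (z : E) : ∃ U : E ≃ₗᵢ[ℝ] E, U z = EuclideanSpace.single 0 ‖z‖ := by
  refine ⟨Submodule.reflection (ℝ ∙ (z - EuclideanSpace.single 0 ‖z‖))ᗮ, ?_⟩
  apply Submodule.reflection_sub
  simp

lemma lintegral_rot (U : E ≃ₗᵢ[ℝ] E) (F : E → ℝ≥0∞) : ∫⁻ p, F (U p) = ∫⁻ p, F p :=
  (LinearIsometryEquiv.measurePreserving U).lintegral_comp_emb U.toHomeomorph.measurableEmbedding F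

lemma inner_single0 (q : E) (ρ : ℝ) : ⟪q, (EuclideanSpace.single 0 ρ : E)⟫ = q 0 * ρ := by
  rw [EuclideanSpace.inner_single_right]; simp [mul_comm]

end KTaux

namespace KTaux

lemma pZero_pos (p : E) : 0 < pZero p := Real.sqrt_pos.2 (by positivity)

lemma pZero_sq (p : E) : pZero p ^ 2 = 1 + ‖p‖ ^ 2 := Real.sq_sqrt (by positivity)

lemma one_le_pZero (p : E) : 1 ≤ pZero p := by
  unfold pZero; rw [Real.one_le_sqrt]; nlinarith [sq_nonneg ‖p‖]

lemma japanese (r : ℝ) (hr : 1 < r) : ∫⁻ x : ℝ, ENNReal.ofReal ((1 + x ^ 2) ^ (-r / 2)) < ⊤ := by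
  have h := integrable_rpow_neg_one_add_norm_sq (E := ℝ) (μ := volume) (r := r) (by simpa using hr)
  have h2 := h.lintegral_lt_top
  simpa using h2

lemma inv_sq_le {X A B s : ℝ} (hA : 0 < A) (hB : 0 < B) (hAX : A ≤ X) (hBX : B ≤ X)
    (hs : 0 ≤ s) (hs2 : s ≤ 2) : (X ^ 2)⁻¹ ≤ A ^ (-s) * B ^ (-(2 - s)) := by
  have hX : 0 < X := hA.trans_le hAX
  have e : (X ^ 2)⁻¹ = X ^ (-s) * X ^ (-(2 - s)) := by
    rw [← Real.rpow_add hX, ← Real.rpow_natCast, ← Real.rpow_neg hX.le]; congr 1; push_cast; ring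
  rw [e]
  exact mul_le_mul (Real.rpow_le_rpow_of_nonpos hA hAX (by linarith))
    (Real.rpow_le_rpow_of_nonpos hB hBX (by linarith)) (Real.rpow_nonneg hX.le _)
    (Real.rpow_nonneg hA.le _)

lemma norm_sq_coord (p : E) : ‖p‖ ^ 2 = p 0 ^ 2 + p 1 ^ 2 := by
  rw [EuclideanSpace.norm_sq_eq]; simp

/-- Lower bounds on `1 + p̂·ξ`. -/
lemma lower {P a b ρ : ℝ} (hP : 0 < P) (hP2 : P ^ 2 = 1 + (a ^ 2 + b ^ 2)) (h0 : 0 ≤ ρ)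
    (h1 : ρ < 1) : (1 - ρ ^ 2) / 2 ≤ 1 + P⁻¹ * (a * ρ) ∧
      (1 + b ^ 2) / (2 * P ^ 2) ≤ 1 + P⁻¹ * (a * ρ) := by
  have haP : |a| ≤ P := by
    apply abs_le_of_sq_le_sq _ hP.le; nlinarith [sq_nonneg b]
  have h3 : -(ρ * |a|) ≤ a * ρ := by nlinarith [neg_abs_le a]
  have h4 : 1 + P⁻¹ * (a * ρ) = (P + a * ρ) / P := by field_simp
  rw [h4]
  constructor
  · rw [le_div_iff₀ hP]
    nlinarith [mul_nonneg h0 (sub_nonneg.2 haP), abs_nonneg a, mul_nonneg hP.le (sq_nonneg (1 - ρ))]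
  · rw [div_le_div_iff₀ (by positivity) hP]
    have h5 : P - |a| ≤ P + a * ρ := by nlinarith [abs_nonneg a]
    have h6 : (P - |a|) * (P + |a|) = 1 + b ^ 2 := by
      have := sq_abs a; nlinarith
    have h7 : 1 + b ^ 2 ≤ (P + a * ρ) * (2 * P) := by
      rw [← h6]
      exact mul_le_mul h5 (by linarith) (by positivity) (by linarith)
    nlinarith

lemma pint {σ w : ℝ} (hσ : 0 ≤ σ) (hσ2 : σ < 1 / 2) (hw : 2 < w + 4 * σ) :
    ∃ K : ℝ≥0∞, K < ⊤ ∧ ∀ ξ : E, ‖ξ‖ < 1 →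
      ∫⁻ p : E, ENNReal.ofReal (pZero p ^ (-(3 + w)) * ((1 + ⟪pHat p, ξ⟫) ^ 2)⁻¹)
        ≤ K * ENNReal.ofReal (1 - ‖ξ‖ ^ 2) ^ (-(2 * σ)) := by
  set r₁ := w + 4 * σ - 1 with hr₁
  set r₂ := 4 - 4 * σ with hr₂
  refine ⟨4 * ((∫⁻ x : ℝ, ENNReal.ofReal ((1 + x ^ 2) ^ (-r₁ / 2))) *
    ∫⁻ x : ℝ, ENNReal.ofReal ((1 + x ^ 2) ^ (-r₂ / 2))), ?_, fun ξ hξ => ?_⟩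
  · exact ENNReal.mul_lt_top (by simp) (ENNReal.mul_lt_top (japanese _ (by linarith))
      (japanese _ (by linarith)))
  obtain ⟨U, hU⟩ := exists_rot ξ
  set ρ := ‖ξ‖ with hρ
  have hρ0 : 0 ≤ ρ := norm_nonneg _
  have hD : 0 < 1 - ρ ^ 2 := by nlinarith
  obtain ⟨H, hH⟩ : ∃ H : E → ℝ≥0∞, H = fun q : E => 4 * ENNReal.ofReal (1 - ρ ^ 2) ^ (-(2 * σ)) *
        (ENNReal.ofReal ((1 + q 0 ^ 2) ^ (-r₁ / 2)) * ENNReal.ofReal ((1 + q 1 ^ 2) ^ (-r₂ / 2))) :=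
    ⟨_, rfl⟩
  have key : ∀ p : E, ENNReal.ofReal (pZero p ^ (-(3 + w)) * ((1 + ⟪pHat p, ξ⟫) ^ 2)⁻¹) ≤
      H (U p) := by
    intro p
    rw [hH]
    have hin : ⟪pHat p, ξ⟫ = (pZero p)⁻¹ * (U p 0 * ρ) := by
      unfold pHat
      rw [real_inner_smul_left, ← U.inner_map_map p ξ, hU, inner_single0]
    have hP := pZero_pos p
    have hP2 : pZero p ^ 2 = 1 + ((U p 0) ^ 2 + (U p 1) ^ 2) := by
      rw [pZero_sq, ← norm_sq_coord, U.norm_map]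
    set P := pZero p
    set a := U p 0
    set b := U p 1
    obtain ⟨l1, l2⟩ := lower hP hP2 hρ0 hξ
    rw [hin]
    have h1 := inv_sq_le (s := 2 * σ) (by positivity) (by positivity) l1 l2 (by linarith)
      (by linarith)
    have ha1 : 0 < 1 + a ^ 2 := by positivity
    have hb1 : 0 < 1 + b ^ 2 := by positivity
    have h2 : P ^ (-(3 + w)) * (((1 - ρ ^ 2) / 2) ^ (-(2 * σ)) *
        ((1 + b ^ 2) / (2 * P ^ 2)) ^ (-(2 - 2 * σ))) =
        4 * (1 - ρ ^ 2) ^ (-(2 * σ)) * (P ^ (-r₁) * (1 + b ^ 2) ^ (-r₂ / 2)) := by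
      rw [Real.div_rpow hD.le (by norm_num), Real.div_rpow hb1.le (by positivity),
        Real.mul_rpow (by norm_num) (by positivity)]
      have e1 : (P ^ 2) ^ (-(2 - 2 * σ)) = P ^ (-(4 - 4 * σ)) := by
        rw [← Real.rpow_natCast, ← Real.rpow_mul hP.le]; congr 1; push_cast; ring
      have e2 : P ^ (-(3 + w)) = P ^ (-r₁) * P ^ (-(4 - 4 * σ)) := by
        rw [← Real.rpow_add hP]; congr 1; rw [hr₁]; ring
      have e3 : (4 : ℝ)⁻¹ = (2:ℝ) ^ (-(2 * σ)) * (2:ℝ) ^ (-(2 - 2 * σ)) := by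
        rw [← Real.rpow_add (by norm_num)]
        have : -(2 * σ) + -(2 - 2 * σ) = ((-2 : ℤ) : ℝ) := by push_cast; ring
        rw [this, Real.rpow_intCast]; norm_num
      have e4 : -r₂ / 2 = -(2 - 2 * σ) := by rw [hr₂]; ring
      rw [e1, e2, e4]
      have p1 := Real.rpow_pos_of_pos hP (-(4 - 4 * σ))
      have p2 := Real.rpow_pos_of_pos (show (0:ℝ) < 2 by norm_num) (-(2 * σ))
      have p3 := Real.rpow_pos_of_pos (show (0:ℝ) < 2 by norm_num) (-(2 - 2 * σ))
      have e5 : (4:ℝ) = ((2:ℝ) ^ (-(2 * σ)) * (2:ℝ) ^ (-(2 - 2 * σ)))⁻¹ := by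
        rw [← e3]; norm_num
      rw [e5]
      field_simp
    have h3 : P ^ (-r₁) ≤ (1 + a ^ 2) ^ (-r₁ / 2) := by
      have : P ^ (-r₁) = (P ^ 2) ^ (-r₁ / 2) := by
        rw [← Real.rpow_natCast, ← Real.rpow_mul hP.le]; congr 1; push_cast; ring
      rw [this]
      exact Real.rpow_le_rpow_of_nonpos ha1 (by rw [hP2]; nlinarith [sq_nonneg b]) (by linarith)
    have h4 : (4 : ℝ≥0∞) = ENNReal.ofReal 4 := by simp
    simp only
    rw [ENNReal.ofReal_rpow_of_pos hD, h4, ← ENNReal.ofReal_mul (by norm_num),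
      ← ENNReal.ofReal_mul (by positivity), ← ENNReal.ofReal_mul (by positivity)]
    apply ENNReal.ofReal_le_ofReal
    calc _ ≤ P ^ (-(3 + w)) * (((1 - ρ ^ 2) / 2) ^ (-(2 * σ)) *
        ((1 + b ^ 2) / (2 * P ^ 2)) ^ (-(2 - 2 * σ))) := by gcongr
      _ = _ := h2
      _ ≤ _ := by gcongr
  refine (lintegral_mono key).trans ((lintegral_rot U H).le.trans ?_)
  rw [hH]
  have hc : 4 * ENNReal.ofReal (1 - ρ ^ 2) ^ (-(2 * σ)) ≠ ⊤ := by
    rw [ENNReal.ofReal_rpow_of_pos hD]; exact ENNReal.mul_ne_top (by simp) ENNReal.ofReal_ne_top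
  rw [lintegral_const_mul' _ _ hc]
  have hm : ∀ r : ℝ, Measurable fun x : ℝ => ENNReal.ofReal ((1 + x ^ 2) ^ (-r / 2)) := by
    intro r; fun_prop
  rw [lintegral_coord (fun x y => ENNReal.ofReal ((1 + x ^ 2) ^ (-r₁ / 2)) *
    ENNReal.ofReal ((1 + y ^ 2) ^ (-r₂ / 2))) (by
      exact ((hm r₁).comp measurable_fst).mul ((hm r₂).comp measurable_snd))]
  have : ∀ x : ℝ, ∫⁻ y : ℝ, ENNReal.ofReal ((1 + x ^ 2) ^ (-r₁ / 2)) *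
    ENNReal.ofReal ((1 + y ^ 2) ^ (-r₂ / 2)) = ENNReal.ofReal ((1 + x ^ 2) ^ (-r₁ / 2)) *
      ∫⁻ y : ℝ, ENNReal.ofReal ((1 + y ^ 2) ^ (-r₂ / 2)) :=
    fun x => lintegral_const_mul _ (hm r₂)
  simp_rw [this]
  rw [lintegral_mul_const _ (hm r₁)]
  refine le_of_eq ?_
  ring

end KTaux

namespace KTaux

/-- The model kernel `(1-|z|²)_+^{-e}`. -/
noncomputable def kap (e : ℝ) (z : E) : ℝ≥0∞ :=
  (Metric.ball (0 : E) 1).indicator (fun z => ENNReal.ofReal (1 - ‖z‖ ^ 2) ^ (-e)) z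

lemma kap_meas (e : ℝ) : Measurable (kap e) := by
  unfold kap
  exact Measurable.indicator (by fun_prop) Metric.isOpen_ball.measurableSet

lemma kap_of_lt {e : ℝ} {z : E} (h : ‖z‖ < 1) : kap e z = ENNReal.ofReal (1 - ‖z‖ ^ 2) ^ (-e) := by
  unfold kap; rw [indicator_of_mem]; simpa using h

lemma kap_of_ge {e : ℝ} {z : E} (h : 1 ≤ ‖z‖) : kap e z = 0 := by
  unfold kap; rw [indicator_of_notMem]; simpa using h

lemma kap_congr (e : ℝ) {z z' : E} (h : ‖z‖ = ‖z'‖) : kap e z = kap e z' := by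
  by_cases h1 : ‖z‖ < 1
  · rw [kap_of_lt h1, kap_of_lt (h ▸ h1), h]
  · rw [kap_of_ge (not_lt.1 h1), kap_of_ge (h ▸ not_lt.1 h1)]

lemma inner_int {e : ℝ} (he : e < 1) : ∃ K : ℝ≥0∞, K < ⊤ ∧ ∀ A : ℝ, 0 < A →
    ∫⁻ b : ℝ, {b : ℝ | b ^ 2 < A}.indicator (fun b => ENNReal.ofReal (A - b ^ 2) ^ (-e)) b
      ≤ K * ENNReal.ofReal A ^ (1 / 2 - e) := by
  obtain ⟨K, hK, h⟩ := beta_scale (a := -e) (b := -e) (by linarith) (by linarith)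
  refine ⟨K * ENNReal.ofReal (2 ^ (1 - 2 * e)), ENNReal.mul_lt_top hK ENNReal.ofReal_lt_top,
    fun A hA => ?_⟩
  have hs : 0 < √A := Real.sqrt_pos.2 hA
  have hs2 : √A ^ 2 = A := Real.sq_sqrt hA.le
  have h1 := h (-√A) (√A) (by linarith)
  have hset : {b : ℝ | b ^ 2 < A} = Ioo (-√A) (√A) := by
    ext b
    simp only [mem_ofPred_eq, mem_Ioo]
    rw [← abs_lt, Real.lt_sqrt (abs_nonneg b), sq_abs]
  rw [hset, lintegral_indicator measurableSet_Ioo]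
  refine le_trans (le_of_eq ?_) (h1.trans (le_of_eq ?_))
  · refine setLIntegral_congr_fun measurableSet_Ioo fun b hb => ?_
    have e1 : A - b ^ 2 = (b - -√A) * (√A - b) := by linear_combination -hs2
    rw [e1, ENNReal.ofReal_mul (by linarith [hb.1]),
      ENNReal.mul_rpow_of_ne_top ENNReal.ofReal_ne_top ENNReal.ofReal_ne_top]
  · have e4 : √A ^ (1 - 2 * e) = A ^ (1 / 2 - e) := by
      rw [Real.sqrt_eq_rpow, ← Real.rpow_mul hA.le]
      congr 1; ring
    have e2 : √A - -√A = 2 * √A := by ring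
    have e3 : -e + -e + 1 = 1 - 2 * e := by ring
    rw [e2, e3, mul_assoc, ENNReal.ofReal_rpow_of_pos (by positivity), ENNReal.ofReal_rpow_of_pos hA,
      ← ENNReal.ofReal_mul (by positivity), Real.mul_rpow (by norm_num) hs.le, e4]

lemma kap_coord (e : ℝ) (z : E) : kap e z = {b : ℝ | b ^ 2 < 1 - z 0 ^ 2}.indicator
    (fun b => ENNReal.ofReal (1 - z 0 ^ 2 - b ^ 2) ^ (-e)) (z 1) := by
  have hn := norm_sq_coord z
  by_cases h : ‖z‖ < 1
  · rw [kap_of_lt h, indicator_of_mem, hn]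
    · congr 2; ring
    · have : ‖z‖ ^ 2 < 1 := by nlinarith [norm_nonneg z]
      simp only [mem_ofPred_eq]; linarith
  · rw [kap_of_ge (not_lt.1 h), indicator_of_notMem]
    have : 1 ≤ ‖z‖ ^ 2 := by nlinarith [not_lt.1 h]
    simp only [mem_ofPred_eq]; linarith

lemma meas_ind (e : ℝ) : Measurable (fun z : ℝ × ℝ => {b : ℝ | b ^ 2 < 1 - z.1 ^ 2}.indicator
    (fun b => ENNReal.ofReal (1 - z.1 ^ 2 - b ^ 2) ^ (-e)) z.2) := by
  have : (fun z : ℝ × ℝ => {b : ℝ | b ^ 2 < 1 - z.1 ^ 2}.indicator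
    (fun b => ENNReal.ofReal (1 - z.1 ^ 2 - b ^ 2) ^ (-e)) z.2) =
    {z : ℝ × ℝ | z.2 ^ 2 < 1 - z.1 ^ 2}.indicator
      (fun z => ENNReal.ofReal (1 - z.1 ^ 2 - z.2 ^ 2) ^ (-e)) := by
    ext z; simp [indicator]
  rw [this]
  exact Measurable.indicator (by fun_prop) (measurableSet_lt (by fun_prop) (by fun_prop))

lemma kap_int {e : ℝ} (he : e < 1) : ∫⁻ z : E, kap e z < ⊤ := by
  obtain ⟨K, hK, h⟩ := inner_int he
  obtain ⟨K', hK', h'⟩ := inner_int (e := e - 1 / 2) (by linarith)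
  simp_rw [kap_coord]
  rw [lintegral_coord (fun a b => {b : ℝ | b ^ 2 < 1 - a ^ 2}.indicator
    (fun b => ENNReal.ofReal (1 - a ^ 2 - b ^ 2) ^ (-e)) b) (meas_ind e)]
  have : ∀ a : ℝ, ∫⁻ b : ℝ, {b : ℝ | b ^ 2 < 1 - a ^ 2}.indicator
    (fun b => ENNReal.ofReal (1 - a ^ 2 - b ^ 2) ^ (-e)) b ≤
      K * {a : ℝ | a ^ 2 < 1}.indicator (fun a => ENNReal.ofReal (1 - a ^ 2) ^ (-(e - 1 / 2))) a := by
    intro a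
    by_cases ha : a ^ 2 < 1
    · rw [indicator_of_mem (by exact ha)]
      have := h (1 - a ^ 2) (by linarith)
      rwa [show -(e - 1 / 2) = 1 / 2 - e by ring]
    · have : {b : ℝ | b ^ 2 < 1 - a ^ 2} = ∅ := by
        ext b; simp only [mem_ofPred_eq, mem_empty_iff_false, iff_false]; nlinarith [sq_nonneg b]
      simp [this]
  refine (lintegral_mono this).trans_lt ?_
  rw [lintegral_const_mul' _ _ hK.ne]
  refine ENNReal.mul_lt_top hK ((h' 1 one_pos).trans_lt ?_)
  simp [hK']

lemma kap_sq (e : ℝ) (z : E) : kap e z ^ (2:ℝ) = kap (2 * e) z := by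
  by_cases h : ‖z‖ < 1
  · rw [kap_of_lt h, kap_of_lt h, ← ENNReal.rpow_mul]; congr 1; ring
  · rw [kap_of_ge (not_lt.1 h), kap_of_ge (not_lt.1 h)]; simp

/-- Majorant of `kap (15/16) * kap (15/16)`. -/
noncomputable def v0 (z : E) : ℝ≥0∞ :=
  {z : E | 0 < ‖z‖ ∧ ‖z‖ < 2}.indicator (fun z => ENNReal.ofReal ‖z‖ ^ (-(15/16) : ℝ) *
    ENNReal.ofReal (1 - ‖z‖ / 2) ^ (-(3/8) : ℝ)) z

lemma v0_meas : Measurable v0 := by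
  unfold v0
  refine Measurable.indicator (by fun_prop) ?_
  exact (measurableSet_lt measurable_const measurable_norm).inter
    (measurableSet_lt measurable_norm measurable_const)

lemma v0_ne_top (z : E) : v0 z ≠ ⊤ := by
  unfold v0
  by_cases h : z ∈ {z : E | 0 < ‖z‖ ∧ ‖z‖ < 2}
  · rw [indicator_of_mem h, ENNReal.ofReal_rpow_of_pos h.1,
      ENNReal.ofReal_rpow_of_pos (by linarith [h.2])]
    exact ENNReal.mul_ne_top ENNReal.ofReal_ne_top ENNReal.ofReal_ne_top
  · rw [indicator_of_notMem h]; simp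

lemma kk_bound : ∃ K : ℝ≥0∞, K < ⊤ ∧ ∀ z : E, z ≠ 0 →
    ∫⁻ y : E, kap (15/16) y * kap (15/16) (z - y) ≤ K * v0 z := by
  obtain ⟨K, hK, h⟩ := inner_int (e := 15/16) (by norm_num)
  obtain ⟨K', hK', h'⟩ := beta_scale (a := -(15/16)) (b := -(7/16)) (by norm_num) (by norm_num)
  refine ⟨2 * (K * (ENNReal.ofReal 2 ^ (-(15/16) : ℝ) * K')), ?_, fun z hz => ?_⟩
  · refine ENNReal.mul_lt_top (by simp) (ENNReal.mul_lt_top hK (ENNReal.mul_lt_top ?_ hK'))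
    rw [ENNReal.ofReal_rpow_of_pos (by norm_num)]; simp
  have hd : 0 < ‖z‖ := norm_pos_iff.2 hz
  by_cases hd2 : ‖z‖ < 2
  swap
  · have : ∀ y : E, kap (15/16) y * kap (15/16) (z - y) = 0 := by
      intro y
      by_cases hy : ‖y‖ < 1
      · rw [kap_of_ge (z := z - y), mul_zero]
        have := norm_sub_norm_le z y
        linarith [not_lt.1 hd2]
      · rw [kap_of_ge (not_lt.1 hy), zero_mul]
    simp [this]
  have hv0 : v0 z = ENNReal.ofReal ‖z‖ ^ (-(15/16) : ℝ) *
    ENNReal.ofReal (1 - ‖z‖ / 2) ^ (-(3/8) : ℝ) := by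
    unfold v0; rw [indicator_of_mem]; exact ⟨hd, hd2⟩
  obtain ⟨U, hU⟩ := exists_rot z
  set d := ‖z‖ with hdd
  have hrot : ∫⁻ y : E, kap (15/16) y * kap (15/16) (z - y)
      = ∫⁻ y : E, kap (15/16) y * kap (15/16) (EuclideanSpace.single 0 d - y) := by
    rw [← lintegral_rot U (fun y => kap (15/16) y * kap (15/16) (EuclideanSpace.single 0 d - y))]
    refine lintegral_congr fun y => ?_
    rw [kap_congr (15/16) (U.norm_map y).symm, ← hU, ← map_sub,
      kap_congr (15/16) (U.norm_map (z - y)).symm]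
  rw [hrot]
  set z' : E := EuclideanSpace.single 0 d with hz'
  obtain ⟨F, hF⟩ : ∃ F : ℝ → ℝ → ℝ≥0∞, F = fun a b =>
    (Ico (d/2) 1).indicator (fun a => ENNReal.ofReal (2 * d) ^ (-(15/16) : ℝ) *
      ENNReal.ofReal (a - d/2) ^ (-(15/16) : ℝ)) a * {b : ℝ | b ^ 2 < 1 - a ^ 2}.indicator
    (fun b => ENNReal.ofReal (1 - a ^ 2 - b ^ 2) ^ (-(15/16) : ℝ)) b := ⟨_, rfl⟩
  have hFm : Measurable (fun z : ℝ × ℝ => F z.1 z.2) := by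
    rw [hF]
    refine Measurable.mul ?_ (meas_ind _)
    have h0 : Measurable ((Ico (d/2) 1).indicator
      (fun a => ENNReal.ofReal (2 * d) ^ (-(15/16) : ℝ) *
        ENNReal.ofReal (a - d/2) ^ (-(15/16) : ℝ))) :=
      Measurable.indicator (by fun_prop) measurableSet_Ico
    exact h0.comp measurable_fst
  have hz0 : z' 0 = d := by simp [hz']
  have hz1 : z' 1 = 0 := by simp [hz']
  have half : ∀ y : E, d / 2 ≤ y 0 →
      kap (15/16) y * kap (15/16) (z' - y) ≤ F (y 0) (y 1) := by
    intro y hy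
    by_cases h1 : ‖y‖ < 1
    swap
    · rw [kap_of_ge (not_lt.1 h1), zero_mul]; exact zero_le
    by_cases h2 : ‖z' - y‖ < 1
    swap
    · rw [kap_of_ge (not_lt.1 h2), mul_zero]; exact zero_le
    have hn := norm_sq_coord y
    have h1' : ‖y‖ ^ 2 < 1 := by nlinarith [norm_nonneg y]
    have hn2 := norm_sq_coord (z' - y)
    have hc0 : (z' - y) 0 = d - y 0 := by simp [hz0]
    have hc1 : (z' - y) 1 = - y 1 := by simp [hz1]
    rw [hc0, hc1] at hn2
    have hy1 : y 0 < 1 := by nlinarith [sq_nonneg (y 1)]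
    rw [hF]; simp only []
    rw [indicator_of_mem (show y 0 ∈ Ico (d/2) 1 from ⟨hy, hy1⟩), ← kap_coord, mul_comm]
    gcongr
    rw [kap_of_lt h2, ← ENNReal.mul_rpow_of_ne_top ENNReal.ofReal_ne_top ENNReal.ofReal_ne_top,
      ← ENNReal.ofReal_mul (by positivity)]
    apply rpow_neg_anti _ (by norm_num)
    apply ENNReal.ofReal_le_ofReal
    rw [hn2]; nlinarith
  have key : ∀ y : E, kap (15/16) y * kap (15/16) (z' - y) ≤
      F (y 0) (y 1) + F ((z' - y) 0) ((z' - y) 1) := by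
    intro y
    by_cases hy : d / 2 ≤ y 0
    · exact (half y hy).trans (le_self_add)
    · have := half (z' - y) (by simp [hz0]; linarith)
      rw [sub_sub_cancel, mul_comm] at this
      exact this.trans (le_add_self)
  have hm1 : Measurable (fun y : E => F (y 0) (y 1)) := by
    have h0 : Measurable (fun y : E => (y 0, y 1)) := by fun_prop
    exact hFm.comp h0
  refine (lintegral_mono key).trans ?_
  rw [lintegral_add_left hm1, lintegral_sub_left_eq_self (fun y : E => F (y 0) (y 1)) z', ← two_mul,
    lintegral_coord F hFm, mul_assoc]
  gcongr
  have hin : ∀ a : ℝ, ∫⁻ b, F a b ≤ (Ico (d/2) 1).indicator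
      (fun a => K * ENNReal.ofReal (2 * d) ^ (-(15/16) : ℝ) *
        (ENNReal.ofReal (a - d/2) ^ (-(15/16) : ℝ) * ENNReal.ofReal (1 - a) ^ (-(7/16) : ℝ))) a := by
    intro a
    rw [hF]; simp only []
    rw [lintegral_const_mul _ (by
      exact Measurable.indicator (by fun_prop) (measurableSet_lt (by fun_prop) (by fun_prop)))]
    by_cases ha : a ∈ Ico (d/2) 1
    · rw [indicator_of_mem ha, indicator_of_mem ha]
      have ha0 : 0 < a := by linarith [ha.1]
      have h1 := h (1 - a ^ 2) (by nlinarith [ha.2])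
      have h2 : ENNReal.ofReal (1 - a ^ 2) ^ (1 / 2 - 15 / 16 : ℝ) ≤
          ENNReal.ofReal (1 - a) ^ (-(7/16) : ℝ) := by
        rw [show (1 / 2 - 15 / 16 : ℝ) = -(7/16) by norm_num]
        apply rpow_neg_anti _ (by norm_num)
        apply ENNReal.ofReal_le_ofReal
        nlinarith [ha.2]
      calc _ ≤ ENNReal.ofReal (2 * d) ^ (-(15/16) : ℝ) *
      ENNReal.ofReal (a - d/2) ^ (-(15/16) : ℝ) * (K * ENNReal.ofReal (1 - a) ^ (-(7/16) : ℝ)) := by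
            gcongr
            exact h1.trans (by gcongr)
        _ = _ := by ring
    · rw [indicator_of_notMem ha, zero_mul]; exact zero_le
  refine (lintegral_mono hin).trans ?_
  rw [lintegral_indicator measurableSet_Ico, lintegral_const_mul' _ _ (by
      refine ENNReal.mul_ne_top hK.ne ?_
      rw [ENNReal.ofReal_rpow_of_pos (by positivity)]; exact ENNReal.ofReal_ne_top),
    ← restrict_Ioo_eq_restrict_Ico]
  refine (mul_le_mul_right (h' (d/2) 1 (by linarith)) _).trans (le_of_eq ?_)
  rw [hv0, ENNReal.ofReal_mul (by norm_num),
    ENNReal.mul_rpow_of_ne_top ENNReal.ofReal_ne_top ENNReal.ofReal_ne_top,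
    show (-(15/16) + -(7/16) + 1 : ℝ) = -(3/8) by norm_num]
  ring

end KTaux

namespace KTaux

lemma kap_neg (e : ℝ) (z : E) : kap e (-z) = kap e z := kap_congr e (norm_neg z)

lemma v0_sq : ∫⁻ z : E, v0 z ^ (2:ℝ) < ⊤ := by
  obtain ⟨h, hh⟩ : ∃ h : ℝ → ℝ, h = fun r => r ^ (-(15/8) : ℝ) * (2 - r) ^ (-(3/4) : ℝ) := ⟨_, rfl⟩
  have hInteg : IntegrableOn (fun x : E => h ‖x‖) (Metric.ball (0 : E) 2) volume := by
    rw [integrableOn_fun_norm_addHaar]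
    obtain ⟨K, hK, hb⟩ := beta_scale (a := -(7/8)) (b := -(3/4)) (by norm_num) (by norm_num)
    have hb1 := hb 0 2 (by norm_num)
    refine ⟨?_, ?_⟩
    · refine Measurable.aestronglyMeasurable ?_
      rw [hh]; fun_prop
    · rw [hasFiniteIntegral_iff_enorm]
      refine lt_of_le_of_lt ?_ (hb1.trans_lt (ENNReal.mul_lt_top hK ?_))
      · refine setLIntegral_mono' measurableSet_Ioo fun y hy => le_of_eq ?_
        have h0 : 0 < y := hy.1
        have h2 : 0 < 2 - y := by linarith [hy.2]
        rw [sub_zero, ENNReal.ofReal_rpow_of_pos h0, ENNReal.ofReal_rpow_of_pos h2,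
          ← ENNReal.ofReal_mul (by positivity), ← ofReal_norm]
        congr 1
        rw [hh]
        simp only [smul_eq_mul, finrank_euclideanSpace, Fintype.card_fin]
        rw [Real.norm_of_nonneg (by positivity), ← mul_assoc, ← Real.rpow_natCast,
          ← Real.rpow_add h0]
        norm_num
      · rw [ENNReal.ofReal_rpow_of_pos (by norm_num)]; exact ENNReal.ofReal_lt_top
  have hlt := hInteg.lintegral_lt_top
  refine lt_of_le_of_lt ?_ (ENNReal.mul_lt_top (a := ENNReal.ofReal ((1/2 : ℝ) ^ (-(3/4) : ℝ)))
    ENNReal.ofReal_lt_top hlt)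
  rw [← lintegral_const_mul' _ _ ENNReal.ofReal_ne_top, ← lintegral_indicator measurableSet_ball]
  refine lintegral_mono fun z => ?_
  by_cases hz : z ∈ {z : E | 0 < ‖z‖ ∧ ‖z‖ < 2}
  · have h0 : 0 < ‖z‖ := hz.1
    have h2 : 0 < 2 - ‖z‖ := by linarith [hz.2]
    rw [indicator_of_mem (by simpa using hz.2)]
    unfold v0
    rw [indicator_of_mem hz, show 1 - ‖z‖ / 2 = 1 / 2 * (2 - ‖z‖) by ring,
      ENNReal.ofReal_rpow_of_pos h0, ENNReal.ofReal_rpow_of_pos (by positivity),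
      ← ENNReal.ofReal_mul (by positivity), ENNReal.ofReal_rpow_of_pos (by positivity),
      ← ENNReal.ofReal_mul (by positivity)]
    apply le_of_eq
    congr 1
    rw [hh, Real.mul_rpow (by positivity) (by positivity), ← Real.rpow_mul h0.le,
      Real.mul_rpow (by positivity) h2.le, Real.mul_rpow (by positivity) (by positivity),
      ← Real.rpow_mul h2.le, ← Real.rpow_mul (by norm_num)]
    norm_num
    ring
  · unfold v0
    rw [indicator_of_notMem hz]; simp

noncomputable def vv (z : E) : ℝ≥0∞ := 1 + v0 z

lemma vv_meas : Measurable vv := measurable_const.add v0_meas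
lemma vv_ne_top (z : E) : vv z ≠ ⊤ := ENNReal.add_ne_top.2 ⟨by simp, v0_ne_top z⟩
lemma vv_ne_zero (z : E) : vv z ≠ 0 := by unfold vv; simp

lemma v0_int : ∫⁻ z : E, v0 z < ⊤ := by
  have h : ∀ z : E, v0 z ≤ (Metric.ball (0 : E) 2).indicator 1 z + v0 z ^ (2:ℝ) := by
    intro z
    by_cases h1 : 1 ≤ v0 z
    · refine le_trans ?_ le_add_self
      calc v0 z = v0 z ^ (1:ℝ) := by simp
        _ ≤ _ := ENNReal.rpow_le_rpow_of_exponent_le h1 (by norm_num)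
    · by_cases hz : ‖z‖ < 2
      · rw [indicator_of_mem (by simpa using hz)]
        exact (not_le.1 h1).le.trans le_self_add
      · have : v0 z = 0 := by
          unfold v0; rw [indicator_of_notMem]; intro h; exact hz h.2
        rw [this]; exact zero_le
  refine (lintegral_mono h).trans_lt ?_
  rw [lintegral_add_right _ (v0_meas.pow_const _), lintegral_indicator_one measurableSet_ball]
  exact ENNReal.add_lt_top.2 ⟨measure_ball_lt_top, v0_sq⟩

lemma vv0_int : ∫⁻ z : E, vv z * v0 z < ⊤ := by
  have h : ∀ z : E, vv z * v0 z = v0 z + v0 z ^ (2:ℝ) := by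
    intro z; unfold vv
    rw [add_mul, one_mul]; congr 1
    rw [show (2:ℝ) = (2:ℕ) by norm_num, ENNReal.rpow_natCast, sq]
  simp_rw [h]
  rw [lintegral_add_left v0_meas]
  exact ENNReal.add_lt_top.2 ⟨v0_int, v0_sq⟩

lemma L4 : ∃ K : ℝ≥0∞, K < ⊤ ∧ ∀ g : E → ℝ≥0∞, Measurable g →
    ∫⁻ x : E, (∫⁻ y : E, kap (15/16) (y - x) * g y) ^ (4:ℝ) ≤
      K * (∫⁻ y, g y ^ (2:ℝ)) ^ (2:ℝ) := by
  obtain ⟨K, hK, hkk⟩ := kk_bound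
  obtain ⟨k, hk⟩ : ∃ k : E → ℝ≥0∞, k = kap (15/16) := ⟨_, rfl⟩
  have hkm : Measurable k := hk ▸ kap_meas _
  have hkn : ∀ z, k (-z) = k z := fun z => by rw [hk]; exact kap_neg _ z
  rw [← hk] at hkk ⊢
  refine ⟨(∫⁻ z, vv z * (K * v0 z)) * K, ?_, fun g hg => ?_⟩
  · refine ENNReal.mul_lt_top ?_ hK
    have : ∀ z, vv z * (K * v0 z) = K * (vv z * v0 z) := fun z => by ring
    simp_rw [this]
    rw [lintegral_const_mul' _ _ hK.ne]
    exact ENNReal.mul_lt_top hK vv0_int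
  have hne : ∀ᵐ z : E, z ≠ 0 := by simp [ae_iff]
  -- first factor
  have hfirst : ∀ x : E, ∫⁻ z : E × E, k (z.1 - x) * k (z.2 - x) * vv (z.1 - z.2) ≤
      ∫⁻ z, vv z * (K * v0 z) := by
    intro x
    have hvm := vv_meas
    rw [Measure.volume_eq_prod, lintegral_prod _ (by fun_prop)]
    simp only
    calc ∫⁻ y, ∫⁻ y', k (y - x) * k (y' - x) * vv (y - y')
        = ∫⁻ y, ∫⁻ z, k (y - x) * k (y - z - x) * vv z := by
          refine lintegral_congr fun y => ?_
          rw [← lintegral_sub_left_eq_self (fun z => k (y - x) * k (y - z - x) * vv z) y]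
          simp
      _ = ∫⁻ z, ∫⁻ y, k (y - x) * k (y - z - x) * vv z := by
          rw [lintegral_lintegral_swap]
          fun_prop
      _ ≤ _ := by
          refine lintegral_mono_ae ?_
          filter_upwards [hne] with z hz
          rw [lintegral_mul_const _ (by fun_prop), mul_comm]
          gcongr
          refine le_trans (le_of_eq ?_) (hkk z hz)
          rw [← lintegral_sub_right_eq_self (fun y => k y * k (z - y)) x]
          refine lintegral_congr fun y => ?_
          rw [← hkn (z - (y - x))]; congr 2; abel
  have hsecond : ∫⁻ x : E, ∫⁻ z : E × E, k (z.1 - x) * k (z.2 - x) * vv (z.1 - z.2) *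
      (g z.1 * g z.2 / vv (z.1 - z.2)) ^ (2:ℝ) ≤ K * (∫⁻ y, g y ^ (2:ℝ)) ^ (2:ℝ) := by
    have hvm := vv_meas
    rw [lintegral_lintegral_swap (by fun_prop), Measure.volume_eq_prod, lintegral_prod _ (by fun_prop)]
    calc _ ≤ ∫⁻ y, ∫⁻ y', K * (g y ^ (2:ℝ) * g y' ^ (2:ℝ)) := by
          refine lintegral_mono fun y => lintegral_mono_ae ?_
          have : ∀ᵐ y' : E, y' ≠ y := by simp [ae_iff]
          filter_upwards [this] with y' hy'
          have hv0 := vv_ne_zero (y - y')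
          have hvt := vv_ne_top (y - y')
          rw [lintegral_mul_const _ (by fun_prop), lintegral_mul_const _ (by fun_prop)]
          have hb : ∫⁻ x, k (y - x) * k (y' - x) ≤ K * vv (y - y') := by
            refine le_trans (le_of_eq ?_) ((hkk (y - y') (sub_ne_zero.2 hy'.symm)).trans
              (mul_le_mul_right le_add_self K))
            rw [← lintegral_sub_left_eq_self (fun x => k x * k (y - y' - x)) y]
            refine lintegral_congr fun x => ?_
            rw [← hkn (y - y' - (y - x))]; congr 2; abel
          calc _ ≤ K * vv (y - y') * vv (y - y') * (g y * g y' / vv (y - y')) ^ (2:ℝ) := by gcongr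
            _ = K * (vv (y - y') * vv (y - y')) * ((g y * g y') ^ (2:ℝ) / (vv (y - y') * vv (y - y'))) := by
                rw [ENNReal.div_rpow_of_nonneg _ _ (by norm_num), mul_assoc K,
                  show vv (y - y') ^ (2:ℝ) = vv (y - y') * vv (y - y') by
                    rw [show (2:ℝ) = (2:ℕ) by norm_num, ENNReal.rpow_natCast, sq]]
            _ = K * ((vv (y - y') * vv (y - y')) * ((g y * g y') ^ (2:ℝ) / (vv (y - y') * vv (y - y')))) := by
                rw [mul_assoc]
            _ = K * (g y * g y') ^ (2:ℝ) := by
                rw [ENNReal.mul_div_cancel (mul_ne_zero hv0 hv0) (ENNReal.mul_ne_top hvt hvt)]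
            _ ≤ _ := by rw [ENNReal.mul_rpow_of_nonneg _ _ (by norm_num)]
      _ = _ := by
          have : ∀ y, ∫⁻ y', K * (g y ^ (2:ℝ) * g y' ^ (2:ℝ)) =
              g y ^ (2:ℝ) * (K * ∫⁻ y', g y' ^ (2:ℝ)) := by
            intro y
            rw [lintegral_const_mul _ (by fun_prop), lintegral_const_mul _ (by fun_prop)]; ring
          simp_rw [this]
          rw [lintegral_mul_const _ (by fun_prop), ENNReal.rpow_two]; ring
  have hpt : ∀ x : E, (∫⁻ y : E, k (y - x) * g y) ^ (4:ℝ) ≤ (∫⁻ z, vv z * (K * v0 z)) *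
      ∫⁻ z : E × E, k (z.1 - x) * k (z.2 - x) * vv (z.1 - z.2) *
      (g z.1 * g z.2 / vv (z.1 - z.2)) ^ (2:ℝ) := by
    intro x
    have hvm := vv_meas
    have h2 : (∫⁻ y : E, k (y - x) * g y) ^ (2:ℝ) =
        ∫⁻ z : E × E, k (z.1 - x) * k (z.2 - x) * vv (z.1 - z.2) *
          (g z.1 * g z.2 / vv (z.1 - z.2)) := by
      rw [ENNReal.rpow_two, sq, ← lintegral_prod_mul (by fun_prop) (by fun_prop),
        Measure.volume_eq_prod]
      refine lintegral_congr fun z => ?_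
      rw [mul_assoc (k (z.1 - x) * k (z.2 - x)), ENNReal.mul_div_cancel (vv_ne_zero _) (vv_ne_top _)]
      ring
    rw [show (4:ℝ) = 2 * 2 by norm_num, ENNReal.rpow_mul, h2]
    refine (jensen _ (by fun_prop) (by fun_prop) (by norm_num)).trans ?_
    gcongr
    rw [show (2:ℝ) - 1 = 1 by norm_num, ENNReal.rpow_one]
    exact hfirst x
  refine (lintegral_mono hpt).trans ?_
  have hvm := vv_meas
  rw [lintegral_const_mul _ (by
    refine Measurable.lintegral_prod_right' (f := fun w : E × (E × E) => k (w.2.1 - w.1) * k (w.2.2 - w.1) * vv (w.2.1 - w.2.2) *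
      (g w.2.1 * g w.2.2 / vv (w.2.1 - w.2.2)) ^ (2:ℝ)) (by fun_prop)), mul_assoc]
  gcongr

lemma Lc {c e2 e : ℝ} (hc : 4 < c) (he2 : e2 < 1/2) (he : e = 4/c * (15/16) + (1 - 4/c) * e2) :
    ∃ K : ℝ≥0∞, K < ⊤ ∧ ∀ g : E → ℝ≥0∞, Measurable g →
    ∫⁻ x : E, (∫⁻ y : E, kap e (y - x) * g y) ^ c ≤
      K * (∫⁻ y, g y ^ (2:ℝ)) ^ (c/2) := by
  obtain ⟨K, hK, h4⟩ := L4
  have hc0 : 0 < c := by linarith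
  have hth : 0 ≤ 4 / c := by positivity
  have hth1 : 4 / c ≤ 1 := by rw [div_le_one hc0]; exact hc.le
  have hki : ∫⁻ z : E, kap (2 * e2) z < ⊤ := kap_int (by linarith)
  refine ⟨K * (∫⁻ z : E, kap (2 * e2) z) ^ ((c - 4) / 2), ENNReal.mul_lt_top hK
    (ENNReal.rpow_lt_top_of_nonneg (by linarith) hki.ne), fun g hg => ?_⟩
  have hm1 := kap_meas (15/16)
  have hm2 := kap_meas e2
  have hpt : ∀ x : E, (∫⁻ y : E, kap e (y - x) * g y) ^ c ≤
      (∫⁻ y : E, kap (15/16) (y - x) * g y) ^ (4:ℝ) *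
      ((∫⁻ z : E, kap (2 * e2) z) ^ ((c - 4) / 2) * (∫⁻ y, g y ^ (2:ℝ)) ^ ((c - 4) / 2)) := by
    intro x
    have h1 : ∫⁻ y : E, kap e (y - x) * g y ≤ (∫⁻ y : E, kap (15/16) (y - x) * g y) ^ (4/c) *
        (∫⁻ y : E, kap e2 (y - x) * g y) ^ (1 - 4/c) := by
      refine le_trans (lintegral_mono fun y => ?_) (ENNReal.lintegral_mul_norm_pow_le
        (by fun_prop) (by fun_prop) hth (by linarith) (by ring))
      have hkk : kap e (y - x) = kap (15/16) (y - x) ^ (4/c) * kap e2 (y - x) ^ (1 - 4/c) := by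
        by_cases hy : ‖y - x‖ < 1
        · have hp : 0 < 1 - ‖y - x‖ ^ 2 := by nlinarith [norm_nonneg (y - x)]
          rw [kap_of_lt hy, kap_of_lt hy, kap_of_lt hy, ← ENNReal.rpow_mul, ← ENNReal.rpow_mul,
            ← ENNReal.rpow_add _ _ (by simpa using hp) ENNReal.ofReal_ne_top, he]
          congr 1; ring
        · rw [kap_of_ge (not_lt.1 hy), kap_of_ge (not_lt.1 hy), ENNReal.zero_rpow_of_pos (by positivity),
            zero_mul]
      rw [hkk, ENNReal.mul_rpow_of_nonneg _ _ hth, ENNReal.mul_rpow_of_nonneg _ _ (by linarith)]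
      apply le_of_eq
      calc _ = kap (15/16) (y - x) ^ (4/c) * kap e2 (y - x) ^ (1 - 4/c) *
            (g y ^ (4/c) * g y ^ (1 - 4/c)) := by
            rw [← ENNReal.rpow_add_of_nonneg _ _ hth (by linarith)]; simp
        _ = _ := by ring
    have h2 : ∫⁻ y : E, kap e2 (y - x) * g y ≤ (∫⁻ z : E, kap (2 * e2) z) ^ (1/2 : ℝ) *
        (∫⁻ y, g y ^ (2:ℝ)) ^ (1/2 : ℝ) := by
      have := ENNReal.lintegral_mul_norm_pow_le (μ := (volume : Measure E))
        (f := fun y => kap e2 (y - x) ^ (2:ℝ)) (g := fun y => g y ^ (2:ℝ))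
        (by fun_prop) (by fun_prop) (p := 1/2) (q := 1/2) (by norm_num) (by norm_num) (by norm_num)
      refine le_trans (le_of_eq ?_) (this.trans (le_of_eq ?_))
      · refine lintegral_congr fun y => ?_
        rw [← ENNReal.rpow_mul, ← ENNReal.rpow_mul]; norm_num
      · simp_rw [kap_sq]
        rw [lintegral_sub_right_eq_self (fun y => kap (2 * e2) y) x]
    calc _ ≤ ((∫⁻ y : E, kap (15/16) (y - x) * g y) ^ (4/c) *
        ((∫⁻ z : E, kap (2 * e2) z) ^ (1/2 : ℝ) *
        (∫⁻ y, g y ^ (2:ℝ)) ^ (1/2 : ℝ)) ^ (1 - 4/c)) ^ c := by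
          refine ENNReal.rpow_le_rpow (h1.trans ?_) hc0.le
          gcongr
      _ = _ := by
          rw [ENNReal.mul_rpow_of_nonneg _ _ hc0.le, ← ENNReal.rpow_mul, ← ENNReal.rpow_mul,
            show 4 / c * c = 4 by field_simp, show (1 - 4 / c) * c = c - 4 by field_simp,
            ENNReal.mul_rpow_of_nonneg _ _ (by linarith), ← ENNReal.rpow_mul, ← ENNReal.rpow_mul,
            show 1 / 2 * (c - 4) = (c - 4) / 2 by ring]
  refine (lintegral_mono hpt).trans ?_
  rw [lintegral_mul_const _ (by
    refine Measurable.pow_const ?_ _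
    exact Measurable.lintegral_prod_right' (f := fun w : E × E => kap (15/16) (w.2 - w.1) * g w.2)
      (by fun_prop))]
  calc _ ≤ K * (∫⁻ y, g y ^ (2:ℝ)) ^ (2:ℝ) * ((∫⁻ z : E, kap (2 * e2) z) ^ ((c - 4) / 2) * (∫⁻ y, g y ^ (2:ℝ)) ^ ((c - 4) / 2)) := by
        gcongr; exact h4 g hg
    _ = K * (∫⁻ z : E, kap (2 * e2) z) ^ ((c - 4) / 2) * ((∫⁻ y, g y ^ (2:ℝ)) ^ (2:ℝ) * (∫⁻ y, g y ^ (2:ℝ)) ^ ((c - 4) / 2)) := by ring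
    _ = _ := by
        rw [← ENNReal.rpow_add_of_nonneg _ _ (by norm_num) (by linarith)]
        congr 2; ring

lemma LcScaled {c e2 e : ℝ} (hc : 4 < c) (he2 : e2 < 1/2)
    (he : e = 4/c * (15/16) + (1 - 4/c) * e2) :
    ∃ K : ℝ≥0∞, K < ⊤ ∧ ∀ τ : ℝ, 0 < τ → ∀ g : E → ℝ≥0∞, Measurable g →
    ∫⁻ x : E, (∫⁻ y : E, kap e (τ⁻¹ • (y - x)) * g y) ^ c ≤
      K * ENNReal.ofReal τ ^ (c + 2) * (∫⁻ y, g y ^ (2:ℝ)) ^ (c/2) := by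
  obtain ⟨K, hK, h⟩ := Lc hc he2 he
  have hc0 : 0 < c := by linarith
  refine ⟨K, hK, fun τ hτ g hg => ?_⟩
  have hR0 : ENNReal.ofReal τ ≠ 0 := by simpa using hτ
  have hRt : ENNReal.ofReal τ ≠ ⊤ := ENNReal.ofReal_ne_top
  set R := ENNReal.ofReal τ with hR
  have hgt : Measurable (fun u : E => g (τ • u)) := by fun_prop
  have h1 := h _ hgt
  have hfr : Module.finrank ℝ E = 2 := by simp
  have hin : ∀ x : E, ∫⁻ y : E, kap e (τ⁻¹ • (y - x)) * g y =
      R ^ 2 * ∫⁻ u : E, kap e (u - τ⁻¹ • x) * g (τ • u) := by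
    intro x
    have := lintegral_scale (volume : Measure E) hτ (fun u => kap e (u - τ⁻¹ • x) * g (τ • u))
    rw [hfr] at this
    rw [← this]
    refine lintegral_congr fun y => ?_
    rw [smul_inv_smul₀ hτ.ne', smul_sub]
  have hout := lintegral_scale (volume : Measure E) hτ
    (fun x => (R ^ 2 * ∫⁻ u : E, kap e (u - x) * g (τ • u)) ^ c)
  rw [hfr] at hout
  simp_rw [hin]
  rw [hout]
  have hg2 := lintegral_scale (volume : Measure E) hτ (fun u => g (τ • u) ^ (2:ℝ))
  rw [hfr] at hg2
  simp_rw [smul_inv_smul₀ hτ.ne'] at hg2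
  simp_rw [ENNReal.mul_rpow_of_nonneg _ _ hc0.le]
  rw [lintegral_const_mul' _ _ (by
    exact ENNReal.rpow_ne_top_of_nonneg hc0.le (ENNReal.pow_ne_top hRt)), hg2,
    ENNReal.mul_rpow_of_nonneg _ _ (by positivity)]
  calc _ ≤ R ^ 2 * ((R ^ 2) ^ c * (K * (∫⁻ u, g (τ • u) ^ (2:ℝ)) ^ (c/2))) := by gcongr
    _ = _ := by
      have hpw : R ^ 2 * (R ^ 2) ^ c = R ^ (c + 2) * (R ^ 2) ^ (c / 2) := by
        rw [← ENNReal.rpow_two, ← ENNReal.rpow_mul, ← ENNReal.rpow_mul,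
          ← ENNReal.rpow_add _ _ hR0 hRt, ← ENNReal.rpow_add _ _ hR0 hRt]
        congr 1; ring
      calc _ = (R ^ 2 * (R ^ 2) ^ c) * (K * (∫⁻ u, g (τ • u) ^ (2:ℝ)) ^ (c/2)) := by ring
        _ = _ := by rw [hpw]; ring

end KTaux

namespace KTaux

lemma pZero_meas : Measurable pZero := by unfold pZero; fun_prop
lemma pHat_meas : Measurable pHat := by
  unfold pHat; exact (pZero_meas.inv).smul measurable_id

lemma stepP {C₀ σ w : ℝ} (hC : 0 < C₀) (hσ : 0 ≤ σ) (hσ2 : σ < 1/2) (hw : 2 < w + 4 * σ) :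
    ∃ K : ℝ≥0∞, K < ⊤ ∧ ∀ F : E → ℝ, Measurable F → (∀ p, 0 ≤ F p) → (∀ᵐ p, F p ≤ C₀) →
      ∀ ξ : E, ‖ξ‖ < 1 →
      ∫⁻ p, ENNReal.ofReal (F p / (pZero p * (1 + ⟪pHat p, ξ⟫))) ≤
        K * (ENNReal.ofReal (1 - ‖ξ‖ ^ 2) ^ (-σ) *
          (∫⁻ p, ENNReal.ofReal (F p * pZero p ^ (1 + w))) ^ (1/2 : ℝ)) := by
  obtain ⟨K, hK, h⟩ := pint hσ hσ2 hw
  refine ⟨(ENNReal.ofReal C₀ * K) ^ (1/2 : ℝ), ENNReal.rpow_lt_top_of_nonneg (by norm_num)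
    (ENNReal.mul_lt_top ENNReal.ofReal_lt_top hK).ne, fun F hF hF0 hFC ξ hξ => ?_⟩
  have hm := pZero_meas
  have hm2 := pHat_meas
  have hc := ENNReal.lintegral_mul_norm_pow_le (μ := (volume : Measure E))
    (f := fun p => ENNReal.ofReal C₀ *
      ENNReal.ofReal (pZero p ^ (-(3 + w)) * ((1 + ⟪pHat p, ξ⟫) ^ 2)⁻¹))
    (g := fun p => ENNReal.ofReal (F p * pZero p ^ (1 + w)))
    (by fun_prop) (by fun_prop) (p := 1/2) (q := 1/2) (by norm_num) (by norm_num) (by norm_num)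
  refine le_trans (lintegral_mono_ae ?_) (hc.trans ?_)
  · filter_upwards [hFC] with p hp
    have hp0 : 0 < pZero p := pZero_pos p
    set u := 1 + ⟪pHat p, ξ⟫ with hu
    rw [← ENNReal.ofReal_mul hC.le, ← ENNReal.mul_rpow_of_nonneg _ _ (by norm_num),
      ← ENNReal.ofReal_mul (by positivity),
      ENNReal.ofReal_rpow_of_nonneg (by have := hF0 p; positivity) (by norm_num)]
    apply ENNReal.ofReal_le_ofReal
    rw [← Real.sqrt_eq_rpow]
    apply Real.le_sqrt_of_sq_le
    have e1 : pZero p ^ (-(3 + w)) * pZero p ^ (1 + w) = (pZero p ^ 2)⁻¹ := by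
      rw [← Real.rpow_add hp0, show -(3 + w) + (1 + w) = -(2:ℕ) by push_cast; ring,
        Real.rpow_neg hp0.le, Real.rpow_natCast]
    calc (F p / (pZero p * u)) ^ 2 = F p * F p * ((pZero p ^ 2)⁻¹ * (u ^ 2)⁻¹) := by
          rw [div_pow, mul_pow, div_eq_mul_inv, mul_inv]; ring
      _ ≤ C₀ * F p * ((pZero p ^ 2)⁻¹ * (u ^ 2)⁻¹) := by
          have := hF0 p
          gcongr
      _ = _ := by rw [← e1]; ring
  · rw [lintegral_const_mul' _ _ ENNReal.ofReal_ne_top]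
    calc _ ≤ (ENNReal.ofReal C₀ * (K * ENNReal.ofReal (1 - ‖ξ‖ ^ 2) ^ (-(2 * σ)))) ^ (1/2 : ℝ) *
          (∫⁻ p, ENNReal.ofReal (F p * pZero p ^ (1 + w))) ^ (1/2 : ℝ) := by
          gcongr; exact h ξ hξ
      _ = _ := by
          rw [← mul_assoc (ENNReal.ofReal C₀), ENNReal.mul_rpow_of_nonneg _ _ (by norm_num),
            ← ENNReal.rpow_mul, show -(2 * σ) * (1/2) = -σ by ring, mul_assoc]

/-- The square root of the moment density. -/
noncomputable def gg (f : ℝ → E → E → ℝ) (w : ℝ) (s : ℝ) (y : E) : ℝ≥0∞ :=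
  (∫⁻ p, ENNReal.ofReal (f s y p * pZero p ^ (1 + w))) ^ (1/2 : ℝ)

lemma gg_meas {f : ℝ → E → E → ℝ} (hf : Measurable (fun z : ℝ × E × E => f z.1 z.2.1 z.2.2))
    (w : ℝ) : Measurable (fun z : ℝ × E => gg f w z.1 z.2) := by
  unfold gg
  refine Measurable.pow_const ?_ _
  have hm := pZero_meas
  have h1 : Measurable (fun z : (ℝ × E) × E => f z.1.1 z.1.2 z.2) := by
    have h0 : Measurable (fun z : (ℝ × E) × E => ((z.1.1, z.1.2, z.2) : ℝ × E × E)) := by fun_prop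
    exact hf.comp h0
  exact Measurable.lintegral_prod_right' (f := fun z : (ℝ × E) × E =>
    ENNReal.ofReal (f z.1.1 z.1.2 z.2 * pZero z.2 ^ (1 + w))) (by fun_prop)

lemma momentN_meas {f : ℝ → E → E → ℝ}
    (hf : Measurable (fun z : ℝ × E × E => f z.1 z.2.1 z.2.2))
    (N : ℝ) : Measurable (momentN f N) := by
  unfold momentN
  have hm := pZero_meas
  have h1 : Measurable (fun z : (ℝ × E) × E => f z.1.1 z.1.2 z.2) := by
    have h0 : Measurable (fun z : (ℝ × E) × E => ((z.1.1, z.1.2, z.2) : ℝ × E × E)) := by fun_prop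
    exact hf.comp h0
  have h2 : Measurable (fun z : ℝ × E => ∫⁻ p, ENNReal.ofReal (f z.1 z.2 p * pZero p ^ N)) :=
    Measurable.lintegral_prod_right' (f := fun z : (ℝ × E) × E =>
      ENNReal.ofReal (f z.1.1 z.1.2 z.2 * pZero z.2 ^ N)) (by fun_prop)
  exact Measurable.lintegral_prod_right' h2

lemma WT_bound {C₀ σ w : ℝ} (hC : 0 < C₀) (hσ : 0 ≤ σ) (hσ2 : σ < 1/2) (hw : 2 < w + 4 * σ) :
    ∃ K : ℝ≥0∞, K < ⊤ ∧ ∀ f : ℝ → E → E → ℝ,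
      Measurable (fun z : ℝ × E × E => f z.1 z.2.1 z.2.2) →
      (∀ t x p, 0 ≤ f t x p) → (∀ᵐ z : ℝ × E × E, f z.1 z.2.1 z.2.2 ≤ C₀) →
      ∀ t x, WT f t x ≤ K * ∫⁻ s in Ioo (0:ℝ) t, ENNReal.ofReal (t - s) ^ (-2 : ℝ) *
        ∫⁻ y, kap (1/2 + σ) ((t - s)⁻¹ • (y - x)) * gg f w s y := by
  obtain ⟨K, hK, h⟩ := stepP hC hσ hσ2 hw
  refine ⟨K, hK, fun f hf hf0 hfC t x => ?_⟩
  have hae : ∀ᵐ s : ℝ, ∀ᵐ y : E, ∀ᵐ p : E, f s y p ≤ C₀ := by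
    have h1 := Measure.ae_ae_of_ae_prod (μ := (volume : Measure ℝ))
      (ν := (volume : Measure (E × E))) hfC
    filter_upwards [h1] with s hs
    exact Measure.ae_ae_of_ae_prod (μ := (volume : Measure E)) (ν := (volume : Measure E)) hs
  unfold WT
  rw [← restrict_Ioo_eq_restrict_Ioc, ← lintegral_const_mul' _ _ hK.ne]
  refine setLIntegral_mono_ae' measurableSet_Ioo ?_
  filter_upwards [hae] with s hs hst
  have hτ : 0 < t - s := by linarith [hst.2]
  set τ := t - s with hτd
  have hR0 : ENNReal.ofReal τ ≠ 0 := by simpa using hτ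
  have hRt : ENNReal.ofReal τ ^ (-2:ℝ) ≠ ⊤ := by
    rw [ENNReal.ofReal_rpow_of_pos hτ]; exact ENNReal.ofReal_ne_top
  rw [← lintegral_const_mul' _ _ hRt, ← lintegral_const_mul' _ _ hK.ne]
  have hms : MeasurableSet {y : E | dist y x ≤ τ} := Metric.isClosed_closedBall.measurableSet
  refine (setLIntegral_mono_ae' hms ?_).trans (setLIntegral_le_lintegral _ _)
  filter_upwards [hs] with y hy hyx
  have hyx' : dist y x ≤ τ := hyx
  set ξ : E := τ⁻¹ • (y - x) with hξ
  have hnξ : ‖ξ‖ = dist y x / τ := by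
    rw [hξ, norm_smul, norm_inv, Real.norm_of_nonneg hτ.le, dist_eq_norm]; field_simp
  rcases hyx'.eq_or_lt with heq | hlt
  · rw [heq]; simp
  have hξ1 : ‖ξ‖ < 1 := by rw [hnξ, div_lt_one hτ]; exact hlt
  have hpos : 0 < 1 - ‖ξ‖ ^ 2 := by nlinarith [norm_nonneg ξ]
  have hsq : Real.sqrt (τ ^ 2 - dist y x ^ 2) = τ * Real.sqrt (1 - ‖ξ‖ ^ 2) := by
    rw [show τ ^ 2 - dist y x ^ 2 = τ ^ 2 * (1 - ‖ξ‖ ^ 2) by rw [hnξ]; field_simp,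
      Real.sqrt_mul (by positivity), Real.sqrt_sq hτ.le]
  have hfm : Measurable (f s y) := by
    have h0 : Measurable (fun p : E => ((s, y, p) : ℝ × E × E)) := by fun_prop
    exact hf.comp h0
  have hb := h (f s y) hfm (hf0 s y) hy ξ hξ1
  have hsplit : ∀ p : E, ENNReal.ofReal (f s y p / (pZero p * (1 + ⟪pHat p, ξ⟫) * τ *
      Real.sqrt (τ ^ 2 - dist y x ^ 2))) =
      ENNReal.ofReal (f s y p / (pZero p * (1 + ⟪pHat p, ξ⟫))) *
        (ENNReal.ofReal τ ^ (-2:ℝ) * ENNReal.ofReal (1 - ‖ξ‖ ^ 2) ^ (-(1/2) : ℝ)) := by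
    intro p
    rw [ENNReal.ofReal_rpow_of_pos hτ, ENNReal.ofReal_rpow_of_pos hpos,
      ← ENNReal.ofReal_mul (by positivity), ← ENNReal.ofReal_mul' (by positivity)]
    congr 1
    rw [hsq, Real.rpow_neg hτ.le, Real.rpow_neg hpos.le, ← Real.sqrt_eq_rpow,
      show (2:ℝ) = (2:ℕ) by norm_num, Real.rpow_natCast, div_eq_mul_inv, div_eq_mul_inv,
      ← mul_inv, mul_assoc (f s y p), ← mul_inv]
    congr 2
    ring
  simp_rw [hsplit]
  rw [lintegral_mul_const' _ _ (by
    rw [ENNReal.ofReal_rpow_of_pos hτ, ENNReal.ofReal_rpow_of_pos hpos]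
    exact ENNReal.mul_ne_top ENNReal.ofReal_ne_top ENNReal.ofReal_ne_top)]
  refine (mul_le_mul_left hb _).trans (le_of_eq ?_)
  have hk : kap (1/2 + σ) ξ = ENNReal.ofReal (1 - ‖ξ‖ ^ 2) ^ (-σ) *
      ENNReal.ofReal (1 - ‖ξ‖ ^ 2) ^ (-(1/2) : ℝ) := by
    rw [kap_of_lt hξ1, ← ENNReal.rpow_add _ _ (by simpa using hpos) ENNReal.ofReal_ne_top]
    congr 1; ring
  rw [hk]; unfold gg
  ring

lemma interp {f : ℝ → E → E → ℝ} (hf : Measurable (fun z : ℝ × E × E => f z.1 z.2.1 z.2.2))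
    (hf0 : ∀ t x p, 0 ≤ f t x p) {l N w : ℝ} (hl0 : 0 ≤ l) (hl1 : l ≤ 1)
    (hw : 1 + w = (1 - l) + l * N) (s : ℝ) :
    ∫⁻ y, gg f w s y ^ (2:ℝ) ≤
      (∫⁻ x, ∫⁻ p, ENNReal.ofReal (pZero p * f s x p)) ^ (1 - l) * momentN f N s ^ l := by
  have hm := pZero_meas
  have h1 : Measurable (fun z : E × E => f s z.1 z.2) := by
    have h0 : Measurable (fun z : E × E => ((s, z.1, z.2) : ℝ × E × E)) := by fun_prop
    exact hf.comp h0
  have hc := ENNReal.lintegral_mul_norm_pow_le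
    (μ := (volume : Measure E).prod (volume : Measure E))
    (f := fun z => ENNReal.ofReal (pZero z.2 * f s z.1 z.2))
    (g := fun z => ENNReal.ofReal (f s z.1 z.2 * pZero z.2 ^ N))
    (by fun_prop) (by fun_prop) (p := 1 - l) (q := l) (by linarith) hl0 (by ring)
  unfold momentN gg
  rw [lintegral_prod _ (by fun_prop), lintegral_prod _ (by fun_prop),
    lintegral_prod _ (by fun_prop)] at hc
  refine le_trans (le_of_eq ?_) hc
  refine lintegral_congr fun y => ?_
  rw [← ENNReal.rpow_mul]
  norm_num
  refine lintegral_congr fun p => ?_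
  have hp0 : 0 < pZero p := pZero_pos p
  have hF := hf0 s y p
  rw [ENNReal.ofReal_rpow_of_nonneg (by positivity) (by linarith),
    ENNReal.ofReal_rpow_of_nonneg (by positivity) hl0, ← ENNReal.ofReal_mul (by positivity)]
  congr 1
  rw [Real.mul_rpow hp0.le hF, Real.mul_rpow hF (by positivity), ← Real.rpow_mul hp0.le, hw,
    Real.rpow_add hp0]
  have e1 : f s y p = f s y p ^ (1 - l) * f s y p ^ l := by
    rw [← Real.rpow_add_of_nonneg hF (by linarith) hl0]; simp
  rw [mul_comm N l]
  calc f s y p * (pZero p ^ (1 - l) * pZero p ^ (l * N)) = (f s y p ^ (1 - l) * f s y p ^ l) * (pZero p ^ (1 - l) * pZero p ^ (l * N)) := by rw [← e1]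
    _ = _ := by ring

end KTaux

namespace KTaux

lemma time1 {c : ℝ} (hc : 4 < c) : ∃ K : ℝ≥0∞, K < ⊤ ∧ ∀ m n : ℝ, m < n →
    ∫⁻ s in Ioo m n, ENNReal.ofReal (n - s) ^ (-1 + 2/c) ≤ K * ENNReal.ofReal (n - m) ^ (2/c) := by
  have hc0 : 0 < 2 / c := by positivity
  obtain ⟨K, hK, h⟩ := beta_scale (a := 0) (b := -1 + 2/c) (by norm_num) (by linarith)
  refine ⟨K, hK, fun m n hmn => ?_⟩
  have := h m n hmn
  simpa using this

lemma time2 {c : ℝ} (hc : 4 < c) : ∃ K : ℝ≥0∞, K < ⊤ ∧ ∀ m n : ℝ, m < n →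
    ∫⁻ t in Ioo m n, ENNReal.ofReal (t - m) ^ (-1 + 2/c) ≤ K * ENNReal.ofReal (n - m) ^ (2/c) := by
  have hc0 : 0 < 2 / c := by positivity
  obtain ⟨K, hK, h⟩ := beta_scale (a := -1 + 2/c) (b := 0) (by linarith) (by norm_num)
  refine ⟨K, hK, fun m n hmn => ?_⟩
  have := h m n hmn
  simpa using this

set_option maxHeartbeats 1000000 in
/-- Fixed-time bound for the `L^c` norm. -/
lemma fixed_time {N C₀ C₁ : ℝ} (hN : 13 < N) (hC₀ : 0 < C₀) (hC₁ : 0 < C₁) :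
    ∃ K : ℝ≥0∞, K < ⊤ ∧ ∀ T : ℝ, 0 < T → ∀ f : ℝ → E → E → ℝ,
      Measurable (fun z : ℝ × E × E => f z.1 z.2.1 z.2.2) →
      (∀ t x p, 0 ≤ f t x p) → (∀ᵐ z : ℝ × E × E, f z.1 z.2.1 z.2.2 ≤ C₀) →
      (∀ t, 0 ≤ t → t < T →
          (∫⁻ x, ∫⁻ p, ENNReal.ofReal (pZero p * f t x p)) ≤ ENNReal.ofReal C₁) →
      ∀ t, 0 ≤ t → t < T →
      ∫⁻ x, WT f t x ^ (N + 2) ≤ K * ENNReal.ofReal T ^ (2 / (N + 2) * (N + 1)) *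
        ∫⁻ s in Ioo 0 t, ENNReal.ofReal (t - s) ^ (-1 + 2 / (N + 2)) * momentN f N s := by
  obtain ⟨c, hcd⟩ : ∃ c, c = N + 2 := ⟨_, rfl⟩
  have hNc : N = c - 2 := by linarith
  have hc : 15 < c := by linarith
  have hc0 : 0 < c := by linarith
  rw [show N + 1 = c - 1 by linarith, ← hcd]
  obtain ⟨σ, hσd⟩ : ∃ σ, σ = 13 / (8 * c) := ⟨_, rfl⟩
  obtain ⟨w, hwd⟩ : ∃ w, w = 2 - 6 / c := ⟨_, rfl⟩
  have hσ0 : 0 ≤ σ := by rw [hσd]; positivity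
  have hσ2 : σ < 1 / 2 := by
    rw [hσd, div_lt_iff₀ (by positivity)]; linarith
  have hw : 2 < w + 4 * σ := by
    have : w + 4 * σ = 2 + 1 / (2 * c) := by rw [hwd, hσd]; field_simp; ring
    rw [this]
    have : 0 < 1 / (2 * c) := by positivity
    linarith
  obtain ⟨K1, hK1, hW⟩ := WT_bound hC₀ hσ0 hσ2 hw
  have h4c : 4 / c < 1 := by rw [div_lt_one hc0]; linarith
  obtain ⟨K2, hK2, hL⟩ := LcScaled (c := c) (e2 := (1/2 - 17 / (8 * c)) / (1 - 4 / c))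
    (e := 1/2 + σ) (by linarith) (by
      rw [div_lt_iff₀ (by linarith)]
      have : 17 / (8 * c) - 2 / c = 1 / (8 * c) := by field_simp; ring
      have h2 : 0 < 1 / (8 * c) := by positivity
      have h3 : 4 / c = 2 * (2 / c) := by ring
      linarith) (by
      rw [mul_div_cancel₀ _ (by linarith), hσd]
      field_simp; ring)
  obtain ⟨K3, hK3, hT1⟩ := time1 (c := c) (by linarith)
  have hl0 : 0 ≤ 2 / c := by positivity
  have hl1 : 2 / c ≤ 1 := by rw [div_le_one hc0]; linarith
  refine ⟨K1 ^ c * (K3 ^ (c - 1) * (K2 * ENNReal.ofReal C₁ ^ ((1 - 2 / c) * (c / 2)))), ?_,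
    fun T hT f hf hf0 hfC hfE t ht0 htT => ?_⟩
  · refine ENNReal.mul_lt_top (ENNReal.rpow_lt_top_of_nonneg hc0.le hK1.ne) (ENNReal.mul_lt_top
      (ENNReal.rpow_lt_top_of_nonneg (by linarith) hK3.ne) (ENNReal.mul_lt_top hK2
      (ENNReal.rpow_lt_top_of_nonneg ?_ ENNReal.ofReal_ne_top)))
    exact mul_nonneg (by linarith) (by positivity)
  obtain ⟨A, hA⟩ : ∃ A : ℝ → E → ℝ≥0∞, A = fun s x =>
    ∫⁻ y, kap (1/2 + σ) ((t - s)⁻¹ • (y - x)) * gg f w s y := ⟨_, rfl⟩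
  have hgm := gg_meas hf w
  have hkm := kap_meas (1/2 + σ)
  have hMm := momentN_meas hf N
  have hAm : Measurable (fun z : E × ℝ => A z.2 z.1) := by
    rw [hA]
    have h1 : Measurable (fun z : (E × ℝ) × E => gg f w z.1.2 z.2) := by
      have h0 : Measurable (fun z : (E × ℝ) × E => ((z.1.2, z.2) : ℝ × E)) := by fun_prop
      exact hgm.comp h0
    have h2 : Measurable (fun z : (E × ℝ) × E =>
        kap (1/2 + σ) ((t - z.1.2)⁻¹ • (z.2 - z.1.1))) := by
      have h0 : Measurable (fun z : (E × ℝ) × E => (t - z.1.2)⁻¹ • (z.2 - z.1.1)) := by fun_prop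
      exact hkm.comp h0
    exact Measurable.lintegral_prod_right' (f := fun z : (E × ℝ) × E =>
      kap (1/2 + σ) ((t - z.1.2)⁻¹ • (z.2 - z.1.1)) * gg f w z.1.2 z.2) (h2.mul h1)
  have hAmx : ∀ x, Measurable (fun s => A s x) := fun x => by
    have h0 : Measurable (fun s : ℝ => ((x, s) : E × ℝ)) := by fun_prop
    exact hAm.comp h0
  rcases ht0.eq_or_lt with h00 | ht
  · have : ∀ x, WT f t x = 0 := by
      intro x; unfold WT; rw [← h00]; simp
    simp_rw [this]
    rw [ENNReal.zero_rpow_of_pos hc0]; simp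
  have hpt : ∀ x, WT f t x ^ c ≤ K1 ^ c * ((K3 * ENNReal.ofReal T ^ (2/c)) ^ (c - 1) *
      ∫⁻ s in Ioo 0 t, ENNReal.ofReal (t - s) ^ (-1 + 2/c) *
        (ENNReal.ofReal (t - s) ^ (-1 - 2/c) * A s x) ^ c) := by
    intro x
    have h1 := hW f hf hf0 hfC t x
    have h2 : ∫⁻ s in Ioo (0:ℝ) t, ENNReal.ofReal (t - s) ^ (-2 : ℝ) *
        ∫⁻ y, kap (1/2 + σ) ((t - s)⁻¹ • (y - x)) * gg f w s y =
        ∫⁻ s in Ioo (0:ℝ) t, ENNReal.ofReal (t - s) ^ (-1 + 2/c) *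
          (ENNReal.ofReal (t - s) ^ (-1 - 2/c) * A s x) := by
      refine setLIntegral_congr_fun measurableSet_Ioo fun s hs => ?_
      have : 0 < t - s := by linarith [hs.2]
      rw [← mul_assoc, ← ENNReal.rpow_add _ _ (by simpa using this) ENNReal.ofReal_ne_top, hA]
      congr 2; ring
    rw [h2] at h1
    refine (ENNReal.rpow_le_rpow h1 hc0.le).trans ?_
    rw [ENNReal.mul_rpow_of_nonneg _ _ hc0.le]
    gcongr
    have hAx := hAmx x
    refine (jensen _ (by fun_prop) (by fun_prop) (by linarith)).trans ?_
    gcongr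
    · linarith
    · refine (hT1 0 t ht).trans ?_
      gcongr
      linarith
  refine (lintegral_mono hpt).trans ?_
  have hswm : Measurable (fun z : E × ℝ => ENNReal.ofReal (t - z.2) ^ (-1 + 2/c) *
        (ENNReal.ofReal (t - z.2) ^ (-1 - 2/c) * A z.2 z.1) ^ c) := by
    have h0 : ∀ b : ℝ, Measurable (fun z : E × ℝ => ENNReal.ofReal (t - z.2) ^ b) := by
      intro b; fun_prop
    exact (h0 _).mul (((h0 _).mul hAm).pow_const c)
  rw [lintegral_const_mul' _ _ (ENNReal.rpow_lt_top_of_nonneg hc0.le hK1.ne).ne,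
    lintegral_const_mul' _ _ (by
      refine (ENNReal.rpow_lt_top_of_nonneg (by linarith) ?_).ne
      exact ENNReal.mul_ne_top hK3.ne (ENNReal.rpow_lt_top_of_nonneg hl0 ENNReal.ofReal_ne_top).ne),
    lintegral_lintegral_swap hswm.aemeasurable]
  have hin : ∀ s ∈ Ioo 0 t, ∫⁻ x, ENNReal.ofReal (t - s) ^ (-1 + 2/c) *
        (ENNReal.ofReal (t - s) ^ (-1 - 2/c) * A s x) ^ c ≤
      (K2 * ENNReal.ofReal C₁ ^ ((1 - 2 / c) * (c / 2))) *
        (ENNReal.ofReal (t - s) ^ (-1 + 2/c) * momentN f N s) := by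
    intro s hs
    have hτ : 0 < t - s := by linarith [hs.2]
    have hR0 : ENNReal.ofReal (t - s) ≠ 0 := by simpa using hτ
    have hRt : ∀ b : ℝ, ENNReal.ofReal (t - s) ^ b ≠ ⊤ := fun b => by
      rw [ENNReal.ofReal_rpow_of_pos hτ]; exact ENNReal.ofReal_ne_top
    rw [lintegral_const_mul' _ _ (hRt _)]
    simp_rw [ENNReal.mul_rpow_of_nonneg _ _ hc0.le]
    rw [lintegral_const_mul' _ _ (by rw [← ENNReal.rpow_mul]; exact hRt _)]
    have hgs : Measurable (gg f w s) := by
      have h0 : Measurable (fun y : E => ((s, y) : ℝ × E)) := by fun_prop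
      exact hgm.comp h0
    have h1 := hL (t - s) hτ (gg f w s) hgs
    have h2 := interp hf hf0 (l := 2 / c) (N := N) (w := w) hl0 hl1 (by
      rw [hwd, hNc]; field_simp; ring) s
    have h3 := hfE s hs.1.le (by linarith [hs.2])
    have h4 : (∫⁻ y, gg f w s y ^ (2:ℝ)) ^ (c / 2) ≤
        ENNReal.ofReal C₁ ^ ((1 - 2 / c) * (c / 2)) * momentN f N s := by
      calc _ ≤ (ENNReal.ofReal C₁ ^ (1 - 2 / c) * momentN f N s ^ (2 / c)) ^ (c / 2) := by
            refine ENNReal.rpow_le_rpow (h2.trans ?_) (by positivity)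
            gcongr
        _ = _ := by
            rw [ENNReal.mul_rpow_of_nonneg _ _ (by positivity), ← ENNReal.rpow_mul,
              ← ENNReal.rpow_mul, show 2 / c * (c / 2) = 1 by field_simp, ENNReal.rpow_one]
    have h5 : (ENNReal.ofReal (t - s) ^ (-1 - 2/c)) ^ c * ENNReal.ofReal (t - s) ^ (c + 2) = 1 := by
      rw [← ENNReal.rpow_mul, ← ENNReal.rpow_add _ _ hR0 ENNReal.ofReal_ne_top,
        show (-1 - 2/c) * c + (c + 2) = 0 by field_simp; ring, ENNReal.rpow_zero]
    calc _ ≤ ENNReal.ofReal (t - s) ^ (-1 + 2/c) * ((ENNReal.ofReal (t - s) ^ (-1 - 2/c)) ^ c *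
          (K2 * ENNReal.ofReal (t - s) ^ (c + 2) * (ENNReal.ofReal C₁ ^ ((1 - 2 / c) * (c / 2)) * momentN f N s))) := by
          rw [hA]
          gcongr
          exact h1.trans (by gcongr)
      _ = ((ENNReal.ofReal (t - s) ^ (-1 - 2/c)) ^ c * ENNReal.ofReal (t - s) ^ (c + 2)) * ((K2 * ENNReal.ofReal C₁ ^ ((1 - 2 / c) * (c / 2))) *
        (ENNReal.ofReal (t - s) ^ (-1 + 2/c) * momentN f N s)) := by ring
      _ = _ := by rw [h5, one_mul]
  calc _ ≤ K1 ^ c * ((K3 * ENNReal.ofReal T ^ (2/c)) ^ (c - 1) * ∫⁻ s in Ioo 0 t,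
      (K2 * ENNReal.ofReal C₁ ^ ((1 - 2 / c) * (c / 2))) *
        (ENNReal.ofReal (t - s) ^ (-1 + 2/c) * momentN f N s)) := by
        refine mul_le_mul_right (mul_le_mul_right ?_ _) _
        exact setLIntegral_mono' measurableSet_Ioo hin
    _ = _ := by
        rw [lintegral_const_mul _ (by fun_prop), ENNReal.mul_rpow_of_nonneg _ _ (by linarith),
          ← ENNReal.rpow_mul]
        ring

/-- Time integration of the fractional convolution. -/
lemma time_int {c : ℝ} (hc : 4 < c) : ∃ K : ℝ≥0∞, K < ⊤ ∧ ∀ T : ℝ, 0 < T → ∀ M : ℝ → ℝ≥0∞,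
    Measurable M → Measurable (fun t => ∫⁻ s in Ioo 0 t, ENNReal.ofReal (t - s) ^ (-1 + 2/c) * M s) ∧
    ∫⁻ t in Ico 0 T, ∫⁻ s in Ioo 0 t, ENNReal.ofReal (t - s) ^ (-1 + 2/c) * M s ≤
      K * ENNReal.ofReal T ^ (2/c) * ∫⁻ s in Ico 0 T, M s := by
  obtain ⟨K, hK, h⟩ := time2 hc
  have hc0 : 0 ≤ 2 / c := by positivity
  refine ⟨K, hK, fun T hT M hM => ?_⟩
  obtain ⟨H, hH⟩ : ∃ H : ℝ × ℝ → ℝ≥0∞, H = {z : ℝ × ℝ | 0 < z.2 ∧ z.2 < z.1}.indicator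
      (fun z => ENNReal.ofReal (z.1 - z.2) ^ (-1 + 2/c) * M z.2) := ⟨_, rfl⟩
  have hHm : Measurable H := by
    rw [hH]
    exact Measurable.indicator (by fun_prop) ((measurableSet_lt measurable_const measurable_snd).inter
      (measurableSet_lt measurable_snd measurable_fst))
  have heq : ∀ t, ∫⁻ s in Ioo 0 t, ENNReal.ofReal (t - s) ^ (-1 + 2/c) * M s = ∫⁻ s, H (t, s) := by
    intro t
    rw [← lintegral_indicator measurableSet_Ioo]
    refine lintegral_congr fun s => ?_
    rw [hH]
    by_cases hs : s ∈ Ioo 0 t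
    · rw [indicator_of_mem hs, indicator_of_mem (show (t, s) ∈ {z : ℝ × ℝ | 0 < z.2 ∧ z.2 < z.1} from hs)]
    · rw [indicator_of_notMem hs, indicator_of_notMem (show (t, s) ∉ {z : ℝ × ℝ | 0 < z.2 ∧ z.2 < z.1} from hs)]
  simp_rw [heq]
  refine ⟨Measurable.lintegral_prod_right' hHm, ?_⟩
  rw [lintegral_lintegral_swap (by fun_prop), ← lintegral_const_mul _ hM,
    ← lintegral_indicator measurableSet_Ico]
  refine lintegral_mono fun s => ?_
  by_cases hs : s ∈ Ico 0 T
  · rw [indicator_of_mem hs]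
    rcases hs.1.eq_or_lt with h0 | h0
    · have : ∀ t, H (t, s) = 0 := fun t => by
        rw [hH, indicator_of_notMem]; rintro ⟨h1, _⟩; simp only at h1; linarith
      simp [this]
    calc _ ≤ ∫⁻ t in Ioo s T, ENNReal.ofReal (t - s) ^ (-1 + 2/c) * M s := by
          rw [← lintegral_indicator measurableSet_Ico, ← lintegral_indicator measurableSet_Ioo]
          refine lintegral_mono fun t => ?_
          by_cases ht : t ∈ Ioo s T
          · rw [indicator_of_mem ht, indicator_of_mem (show t ∈ Ico 0 T from ⟨by linarith [ht.1], ht.2⟩), hH,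
              indicator_of_mem]
            exact ⟨h0, ht.1⟩
          · rw [indicator_of_notMem ht]
            by_cases ht2 : t ∈ Ico 0 T
            · rw [indicator_of_mem ht2, hH, indicator_of_notMem]
              rintro ⟨_, h2⟩
              exact ht ⟨h2, ht2.2⟩
            · rw [indicator_of_notMem ht2]
      _ ≤ K * ENNReal.ofReal (T - s) ^ (2/c) * M s := by
          rw [lintegral_mul_const _ (by fun_prop)]
          gcongr
          exact h s T hs.2
      _ ≤ _ := by
          gcongr
          linarith
  · rw [indicator_of_notMem hs]
    have : ∫⁻ t in Ico 0 T, H (t, s) = ∫⁻ t in Ico 0 T, 0 := by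
      refine setLIntegral_congr_fun measurableSet_Ico fun t ht => ?_
      rw [hH, indicator_of_notMem]
      rintro ⟨h1, h2⟩
      exact hs ⟨h1.le, lt_trans h2 ht.2⟩
    rw [this]; simp

end KTaux

/-- **Moment estimate for `K_T`** (Proposition 5.5).  Let `N > 13`, `f ≤ C₀` a.e.,
with energy `sup_{t<T} ∫∫ p₀ f ≤ C₁`.  Then there are `q₂' ∈ [1,∞)` (depending only on
`N`) and `C > 0`, `k ≥ 0` (depending only on `N, C₀, C₁`, not on `T`) with
`‖W_T‖_{L¹_t([0,T);L^{N+2}_x)}^{N+2}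
  ≤ C (1+T)^k ‖f p₀^N‖_{L^∞_t L¹_x L¹_p}^{(N+2)/(5(N−1))}
      ‖f p₀^N‖_{L^{q₂'}_t L¹_x L¹_p}^{(4N−7)/(5(N−1))}`. -/
theorem KT_moment_estimate (N C₀ C₁ : ℝ) (hN : 13 < N) (hC₀ : 0 < C₀) (hC₁ : 0 < C₁) :
    ∃ q₂' : ℝ, 1 ≤ q₂' ∧
    ∃ C : ℝ≥0, 0 < C ∧ ∃ k : ℝ, 0 ≤ k ∧
      ∀ (T : ℝ), 0 < T →
      ∀ (f : ℝ → EuclideanSpace ℝ (Fin 2) → EuclideanSpace ℝ (Fin 2) → ℝ),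
        Measurable (fun z : ℝ × EuclideanSpace ℝ (Fin 2) × EuclideanSpace ℝ (Fin 2) =>
          f z.1 z.2.1 z.2.2) →
        (∀ t x p, 0 ≤ f t x p) →
        (∀ᵐ z : ℝ × EuclideanSpace ℝ (Fin 2) × EuclideanSpace ℝ (Fin 2),
          f z.1 z.2.1 z.2.2 ≤ C₀) →
        (∀ t, 0 ≤ t → t < T →
          (∫⁻ x, ∫⁻ p, ENNReal.ofReal (pZero p * f t x p)) ≤ ENNReal.ofReal C₁) →
        (∫⁻ t in Ico (0 : ℝ) T,
            (∫⁻ x, WT f t x ^ (N + 2)) ^ (1 / (N + 2))) ^ (N + 2)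
          ≤ C * ENNReal.ofReal (1 + T) ^ k
            * (⨆ t ∈ Ico (0 : ℝ) T, momentN f N t) ^ ((N + 2) / (5 * (N - 1)))
            * ((∫⁻ t in Ico (0 : ℝ) T, momentN f N t ^ q₂') ^ (1 / q₂'))
                ^ ((4 * N - 7) / (5 * (N - 1))) := by
  obtain ⟨K1, hK1, hF⟩ := KTaux.fixed_time hN hC₀ hC₁
  obtain ⟨K2, hK2, hI⟩ := KTaux.time_int (c := N + 2) (by linarith)
  have hc0 : 0 < N + 2 := by linarith
  have hN1 : 0 < 5 * (N - 1) := by linarith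
  have ha0 : 0 ≤ (N + 2) / (5 * (N - 1)) := div_nonneg (by linarith) hN1.le
  have hb0 : 0 ≤ (4 * N - 7) / (5 * (N - 1)) := div_nonneg (by linarith) hN1.le
  have hab : (N + 2) / (5 * (N - 1)) + (4 * N - 7) / (5 * (N - 1)) = 1 := by
    rw [← add_div, div_eq_one_iff_eq hN1.ne']; ring
  set a := (N + 2) / (5 * (N - 1)) with had
  set b := (4 * N - 7) / (5 * (N - 1)) with hbd
  have hKt : K1 * K2 ≠ ⊤ := (ENNReal.mul_lt_top hK1 hK2).ne
  refine ⟨1, le_rfl, (K1 * K2).toNNReal + 1, by positivity, N + 3 + a, by linarith,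
    fun T hT f hf hf0 hfC hfE => ?_⟩
  obtain ⟨hPm, hPi⟩ := hI T hT (momentN f N) (KTaux.momentN_meas hf N)
  set P : ℝ → ℝ≥0∞ := fun t => ∫⁻ s in Ioo 0 t,
    ENNReal.ofReal (t - s) ^ (-1 + 2 / (N + 2)) * momentN f N s with hP
  set S := ⨆ t ∈ Ico (0 : ℝ) T, momentN f N t with hS
  set I := ∫⁻ t in Ico (0 : ℝ) T, momentN f N t with hId
  have hR0 : ENNReal.ofReal T ≠ 0 := by simpa using hT
  have hRt : ENNReal.ofReal T ≠ ⊤ := ENNReal.ofReal_ne_top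
  have hRp : ∀ r : ℝ, ENNReal.ofReal T ^ r ≠ ⊤ := fun r => by
    rw [ENNReal.ofReal_rpow_of_pos hT]; exact ENNReal.ofReal_ne_top
  set R := ENNReal.ofReal T with hR
  have hIS : I ≤ S * R := by
    calc I ≤ ∫⁻ t in Ico (0 : ℝ) T, S := by
          refine setLIntegral_mono' measurableSet_Ico fun t ht => ?_
          exact le_iSup₂ (f := fun t (_ : t ∈ Ico (0 : ℝ) T) => momentN f N t) t ht
      _ = S * R := by rw [setLIntegral_const, Real.volume_Ico, sub_zero]
  have hIab : I ≤ S ^ a * R ^ a * I ^ b := by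
    calc I = I ^ a * I ^ b := by
          rw [← ENNReal.rpow_add_of_nonneg _ _ ha0 hb0, hab, ENNReal.rpow_one]
      _ ≤ (S * R) ^ a * I ^ b := by gcongr
      _ = _ := by rw [ENNReal.mul_rpow_of_nonneg _ _ ha0]
  have hq : (∫⁻ t in Ico (0 : ℝ) T, momentN f N t ^ (1:ℝ)) ^ (1 / (1:ℝ)) = I := by
    simp [hId]
  rw [hq]
  have h1 : (∫⁻ t in Ico (0 : ℝ) T, (∫⁻ x, WT f t x ^ (N + 2)) ^ (1 / (N + 2))) ^ (N + 2) ≤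
      (∫⁻ t in Ico (0 : ℝ) T, 1 * (K1 * R ^ (2 / (N + 2) * (N + 1)) * P t) ^ (1 / (N + 2)))
        ^ (N + 2) := by
    refine ENNReal.rpow_le_rpow ?_ hc0.le
    refine setLIntegral_mono' measurableSet_Ico fun t ht => ?_
    rw [one_mul]
    exact ENNReal.rpow_le_rpow (hF T hT f hf hf0 hfC hfE t ht.1 ht.2) (by positivity)
  have h2 := KTaux.jensen (volume.restrict (Ico (0 : ℝ) T)) (φ := fun _ => 1)
    (h := fun t => (K1 * R ^ (2 / (N + 2) * (N + 1)) * P t) ^ (1 / (N + 2)))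
    aemeasurable_const ((hPm.const_mul _).pow_const _).aemeasurable (c := N + 2) (by linarith)
  refine h1.trans (h2.trans ?_)
  have h3 : ∫⁻ t in Ico (0 : ℝ) T, (1 : ℝ≥0∞) = R := by
    rw [setLIntegral_const, Real.volume_Ico, sub_zero, one_mul]
  have h4 : ∀ t, 1 * ((K1 * R ^ (2 / (N + 2) * (N + 1)) * P t) ^ (1 / (N + 2))) ^ (N + 2) =
      K1 * R ^ (2 / (N + 2) * (N + 1)) * P t := by
    intro t
    rw [one_mul, ← ENNReal.rpow_mul, show 1 / (N + 2) * (N + 2) = 1 by field_simp, ENNReal.rpow_one]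
  simp_rw [h4]
  rw [h3, lintegral_const_mul' _ _ (ENNReal.mul_ne_top hK1.ne (hRp _))]
  calc R ^ (N + 2 - 1) * (K1 * R ^ (2 / (N + 2) * (N + 1)) * ∫⁻ t in Ico 0 T, P t)
      ≤ R ^ (N + 2 - 1) * (K1 * R ^ (2 / (N + 2) * (N + 1)) *
        (K2 * R ^ (2 / (N + 2)) * (S ^ a * R ^ a * I ^ b))) := by
        refine mul_le_mul_right (mul_le_mul_right (hPi.trans ?_) _) _
        exact mul_le_mul_right hIab _
    _ = K1 * K2 * (R ^ (N + 2 - 1) * R ^ (2 / (N + 2) * (N + 1)) * R ^ (2 / (N + 2)) * R ^ a)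
        * S ^ a * I ^ b := by ring
    _ = K1 * K2 * R ^ (N + 3 + a) * S ^ a * I ^ b := by
        rw [← ENNReal.rpow_add _ _ hR0 hRt, ← ENNReal.rpow_add _ _ hR0 hRt,
          ← ENNReal.rpow_add _ _ hR0 hRt]
        congr 4
        field_simp
        ring
    _ ≤ _ := by
        gcongr
        · calc K1 * K2 = ((K1 * K2).toNNReal : ℝ≥0∞) := (ENNReal.coe_toNNReal hKt).symm
            _ ≤ _ := by push_cast; exact le_self_add
        · exact ENNReal.ofReal_le_ofReal (by linarith)
end
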